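/- Let N ≥ 1 be an integer, ω > 0, and 1 < p < p_max, and let u be a ground-state profile of (QLS). If v : ℝ^N → ℝ is smooth, with ∫_{ℝ^N}(v² + |∇v|²) dx < ∞, and satisfies L₊v = 0 pointwise on ℝ^N, then there exist real numbers c₁, …, c_N such that v = Σ_{l=1}^{N} c_l ∂_{x_l}u; that is, the real kernel of L₊ is spanned by the partial derivatives of u. -/

import Mathlib

open MeasureTheory Real Filter Topology

noncomputable section

/-- Partial derivative along the `i`-th coordinate direction. -/
def pd {N : ℕ} {F : Type*} [NormedAddCommGroup F] [NormedSpace ℝ F]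
    (i : Fin N) (f : EuclideanSpace ℝ (Fin N) → F) (x : EuclideanSpace ℝ (Fin N)) : F :=
  fderiv ℝ f x (EuclideanSpace.single i 1)

/-- Euclidean Laplacian. -/
def lap {N : ℕ} {F : Type*} [NormedAddCommGroup F] [NormedSpace ℝ F]
    (f : EuclideanSpace ℝ (Fin N) → F) (x : EuclideanSpace ℝ (Fin N)) : F :=
  ∑ i : Fin N, pd i (pd i f) x

/-- Squared norm of the gradient of a real-valued function: `|∇f|²`. -/
def gradsq {N : ℕ} (f : EuclideanSpace ℝ (Fin N) → ℝ) (x : EuclideanSpace ℝ (Fin N)) : ℝ :=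
  ∑ i : Fin N, (pd i f x) ^ 2

/-- A ground-state profile of the quasilinear Schrödinger equation (QLS)
`-Δu - uΔ(u²) + ωu - u^p = 0` on `ℝ^N`: smooth, positive, radially symmetric with a
strictly decreasing positive profile, solves (QLS) pointwise, and decays
exponentially together with all its derivatives. -/
structure IsGroundState (N : ℕ) (ω p : ℝ) (u : EuclideanSpace ℝ (Fin N) → ℝ) : Prop where
  smooth : ContDiff ℝ (⊤ : ℕ∞) u
  pos : ∀ x, 0 < u x
  radial : ∃ U : ℝ → ℝ, StrictAntiOn U (Set.Ici 0) ∧ (∀ r, 0 ≤ r → 0 < U r) ∧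
      ∀ x, u x = U ‖x‖
  solves : ∀ x, -lap u x - u x * lap (fun y => (u y) ^ 2) x + ω * u x - (u x) ^ p = 0
  decay : ∀ k : ℕ, ∃ C > 0, ∃ δ > 0, ∀ x,
      ‖iteratedFDeriv ℝ k u x‖ ≤ C * Real.exp (-δ * ‖x‖)

/-- The linearized operator `L₊` around `u` (real-valued functions). -/
def Lplus {N : ℕ} (ω p : ℝ) (u η : EuclideanSpace ℝ (Fin N) → ℝ)
    (x : EuclideanSpace ℝ (Fin N)) : ℝ :=
  -lap η x - 2 * u x * lap (fun y => u y * η y) x + ω * η x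
    - (lap (fun y => (u y) ^ 2) x + p * u x ^ (p - 1)) * η x

/-- The linearized operator `L₋` around `u`. -/
def Lminus {N : ℕ} (ω p : ℝ) (u ζ : EuclideanSpace ℝ (Fin N) → ℝ)
    (x : EuclideanSpace ℝ (Fin N)) : ℝ :=
  -lap ζ x + ω * ζ x - (lap (fun y => (u y) ^ 2) x + u x ^ (p - 1)) * ζ x

section
open MeasureTheory Real Filter Topology
noncomputable section

def qS (t : ℝ) : ℝ := √(1 + 2 * t ^ 2)
def qH (t : ℝ) : ℝ := t * qS t / 2 + Real.arsinh (√2 * t) / (2 * √2)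
def qf (ω p t : ℝ) : ℝ := (t ^ p - ω * t) / qS t
def qV (ω p t : ℝ) : ℝ := (p * t ^ (p - 1) - ω) / qS t ^ 2 - (t ^ p - ω * t) * (2 * t) / qS t ^ 4
def qG (ω p t : ℝ) : ℝ := t ^ (p + 1) / (p + 1) - ω * t ^ 2 / 2

lemma qS_arg (t : ℝ) : 0 < 1 + 2 * t ^ 2 := by positivity
lemma qS_pos (t : ℝ) : 0 < qS t := Real.sqrt_pos.2 (qS_arg t)
lemma qS_sq (t : ℝ) : qS t ^ 2 = 1 + 2 * t ^ 2 := Real.sq_sqrt (qS_arg t).le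
lemma qS_one_le (t : ℝ) : 1 ≤ qS t := by
  rw [qS, Real.one_le_sqrt]; nlinarith [sq_nonneg t]

lemma qS_contDiff {n : WithTop ℕ∞} : ContDiff ℝ n qS := by
  unfold qS
  apply ContDiff.sqrt (by fun_prop)
  intro x; exact (qS_arg x).ne'

lemma qH_contDiff {n : WithTop ℕ∞} : ContDiff ℝ n qH := by
  unfold qH
  have := qS_contDiff (n := n)
  have h2 : ContDiff ℝ n (fun t => Real.arsinh (√2 * t)) := Real.contDiff_arsinh.comp (by fun_prop)
  exact ((contDiff_id.mul this).div_const 2).add (h2.div_const _)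

lemma qS_hasDeriv (t : ℝ) : HasDerivAt qS (2 * t / qS t) t := by
  have h : HasDerivAt (fun t : ℝ => 1 + 2 * t ^ 2) (4 * t) t := by
    have := ((hasDerivAt_pow 2 t).const_mul 2).const_add 1
    refine this.congr_deriv ?_; push_cast; ring
  have := h.sqrt (qS_arg t).ne'
  refine this.congr_deriv ?_
  have := (qS_pos t).ne'
  change 4 * t / (2 * qS t) = _
  field_simp; ring

lemma qH_hasDeriv (t : ℝ) : HasDerivAt qH (qS t) t := by
  have h1 := ((hasDerivAt_id t).mul (qS_hasDeriv t)).div_const 2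
  have h2 := ((((hasDerivAt_id t).const_mul √2)).arsinh).div_const (2 * √2)
  have h3 := h1.add h2
  have e : √(1 + (√2 * id t) ^ 2) = qS t := by
    unfold qS; congr 2; rw [mul_pow, Real.sq_sqrt (by norm_num)]; rfl
  refine (h3.congr_deriv ?_)
  rw [e]
  have := (qS_pos t).ne'
  have h5 : √2 ≠ 0 := by positivity
  simp only [id, smul_eq_mul]
  field_simp
  have := qS_sq t
  nlinarith

lemma qH_zero : qH 0 = 0 := by simp [qH]

lemma qf_hasDeriv (ω p : ℝ) {t : ℝ} (ht : 0 < t) :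
    HasDerivAt (qf ω p) (qV ω p t * qS t) t := by
  have h1 : HasDerivAt (fun t : ℝ => t ^ p - ω * t) (p * t ^ (p - 1) - ω) t := by
    have := (Real.hasDerivAt_rpow_const (p := p) (Or.inl ht.ne')).sub ((hasDerivAt_id t).const_mul ω)
    refine this.congr_deriv ?_; ring
  have := h1.div (qS_hasDeriv t) (qS_pos t).ne'
  refine this.congr_deriv ?_
  have := (qS_pos t).ne'
  unfold qV
  field_simp

lemma qG_hasDeriv (ω p : ℝ) (hp : 1 < p) {t : ℝ} (ht : 0 < t) :
    HasDerivAt (qG ω p) (qf ω p t * qS t) t := by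
  have := ((Real.hasDerivAt_rpow_const (p := p+1) (Or.inl ht.ne')).div_const (p+1)).sub
    (((hasDerivAt_pow 2 t).const_mul ω).div_const 2)
  refine this.congr_deriv ?_
  have := (qS_pos t).ne'
  have h2 : p + 1 ≠ 0 := by linarith
  unfold qf
  rw [show p + 1 - 1 = p by ring]
  field_simp
  push_cast; ring

lemma qH_strictMono : StrictMono qH := by
  apply strictMono_of_deriv_pos
  intro x; rw [(qH_hasDeriv x).deriv]; exact qS_pos x

lemma qH_pos {t : ℝ} (ht : 0 < t) : 0 < qH t := by
  rw [← qH_zero]; exact qH_strictMono ht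

/-- H ≤ t S -/
lemma qH_le {t : ℝ} (ht : 0 ≤ t) : qH t ≤ t * qS t := by
  have : MonotoneOn (fun t => t * qS t - qH t) (Set.Ici 0) := by
    have hd : ∀ x, HasDerivAt (fun t => t * qS t - qH t) (1 * qS x + x * (2 * x / qS x) - qS x) x :=
      fun x => ((hasDerivAt_id x).mul (qS_hasDeriv x)).sub (qH_hasDeriv x)
    apply monotoneOn_of_deriv_nonneg (convex_Ici 0)
    · exact fun x _ => (hd x).continuousAt.continuousWithinAt
    · exact fun x _ => (hd x).differentiableAt.differentiableWithinAt
    · intro x _; rw [(hd x).deriv]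
      have := qS_pos x
      have : 0 ≤ x * (2 * x / qS x) := by
        rw [show x * (2 * x / qS x) = 2 * x^2 / qS x by ring]; positivity
      linarith
  have := this (Set.mem_Ici.2 le_rfl) (Set.mem_Ici.2 ht) ht
  simp [qH_zero] at this; linarith

/-- key inequality for monotonicity of A -/
lemma qH_ge {t : ℝ} (ht : 0 ≤ t) : t * qS t ^ 3 ≤ qH t * (1 + 4 * t ^ 2) := by
  have : MonotoneOn (fun t => qH t - t * qS t ^ 3 / (1 + 4 * t ^ 2)) (Set.Ici 0) := by
    have hd : ∀ x, HasDerivAt (fun t => qH t - t * qS t ^ 3 / (1 + 4 * t ^ 2))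
        (qS x * (4 * x ^ 2) / (1 + 4 * x ^ 2) ^ 2) x := by
      intro x
      have h4 : HasDerivAt (fun t : ℝ => 1 + 4 * t ^ 2) (8 * x) x := by
        have := ((hasDerivAt_pow 2 x).const_mul 4).const_add 1
        refine this.congr_deriv ?_; push_cast; ring
      have h4' : 1 + 4 * x ^ 2 ≠ 0 := by positivity
      have := (qH_hasDeriv x).sub ((((hasDerivAt_id x).mul ((qS_hasDeriv x).pow 3))).div h4 h4')
      refine this.congr_deriv ?_
      have hs := (qS_pos x).ne'
      have hq := qS_sq x
      simp only [id, Pi.mul_apply, Pi.pow_apply]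
      field_simp
      have h3 : qS x ^ 3 = qS x * (1 + 2 * x^2) := by rw [← hq]; ring
      have h5 : qS x ^ 4 = (1 + 2 * x^2)^2 := by rw [← hq]; ring
      push_cast
      ring_nf
      simp only [h3, h5, hq]
      ring
    apply monotoneOn_of_deriv_nonneg (convex_Ici 0)
    · exact fun x _ => (hd x).continuousAt.continuousWithinAt
    · exact fun x _ => (hd x).differentiableAt.differentiableWithinAt
    · intro x _; rw [(hd x).deriv]
      have := qS_pos x
      positivity
  have := this (Set.mem_Ici.2 le_rfl) (Set.mem_Ici.2 ht) ht
  simp [qH_zero] at this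
  rwa [div_le_iff₀ (by positivity)] at this

def qA (t : ℝ) : ℝ := qH t / (t * qS t)

lemma qA_pos {t : ℝ} (ht : 0 < t) : 0 < qA t := div_pos (qH_pos ht) (mul_pos ht (qS_pos t))
lemma qA_le {t : ℝ} (ht : 0 < t) : qA t ≤ 1 := by
  rw [qA, div_le_one (mul_pos ht (qS_pos t))]; exact qH_le ht.le

lemma qA_anti : AntitoneOn qA (Set.Ioi 0) := by
  have hd : ∀ x, 0 < x → HasDerivAt qA
      ((qS x * (x * qS x) - qH x * (1 * qS x + x * (2 * x / qS x))) / (x * qS x) ^ 2) x :=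
    fun x hx => (qH_hasDeriv x).div ((hasDerivAt_id x).mul (qS_hasDeriv x)) (mul_pos hx (qS_pos x)).ne'
  apply antitoneOn_of_deriv_nonpos (convex_Ioi 0)
  · exact fun x hx => (hd x hx).continuousAt.continuousWithinAt
  · exact fun x hx => (hd x (by simpa using hx)).differentiableAt.differentiableWithinAt
  · intro x hx
    have hx : 0 < x := by simpa using hx
    rw [(hd x hx).deriv]
    apply div_nonpos_of_nonpos_of_nonneg _ (sq_nonneg _)
    have hs := qS_pos x
    have h1 := qH_ge hx.le
    have hq := qS_sq x
    have : qS x * (x * qS x) - qH x * (1 * qS x + x * (2 * x / qS x))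
      = (x * qS x ^ 3 - qH x * (1 + 4 * x ^ 2)) / qS x := by
      field_simp; rw [hq]; ring
    rw [this]
    exact div_nonpos_of_nonpos_of_nonneg (by linarith) hs.le

def qD (ω p t : ℝ) : ℝ := qV ω p t * qH t - qf ω p t

lemma rpow_split {p t : ℝ} (ht : 0 < t) : t ^ p = t ^ (p - 1) * t := by
  rw [← Real.rpow_add_one ht.ne']; congr 1; ring

lemma qf_eq {ω p t : ℝ} (ht : 0 < t) : qf ω p t = (t ^ (p-1) - ω) * t / qS t := by
  rw [qf, rpow_split ht]; ring

/-- V H in terms of A -/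
lemma qVH_eq {ω p t : ℝ} (ht : 0 < t) : qV ω p t * qH t =
    qA t * (t / qS t) * ((p * t ^ (p-1) - ω) - (t ^ (p-1) - ω) * (2 * t ^ 2 / (1 + 2 * t ^ 2))) := by
  have hs := (qS_pos t).ne'
  rw [qV, qA, rpow_split (p := p) ht, ← qS_sq]
  field_simp

lemma qD_pos {ω p t : ℝ} (hp : 1 < p) (ht : 0 < t) (h : t ^ (p-1) ≤ ω) :
    0 < qD ω p t := by
  rw [qD, qVH_eq ht, qf_eq ht]
  have hs := qS_pos t
  have hτ : 0 < t ^ (p-1) := Real.rpow_pos_of_pos ht _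
  set τ := t ^ (p-1)
  have hA := qA_pos ht
  have hA1 := qA_le ht
  have hm : 0 ≤ 2 * t ^ 2 / (1 + 2 * t ^ 2) := by positivity
  set m := 2 * t ^ 2 / (1 + 2 * t ^ 2)
  have : qA t * (t / qS t) * (p * τ - ω - (τ - ω) * m) - (τ - ω) * t / qS t
    = (t / qS t) * (qA t * ((p - 1) * τ + (ω - τ) * m) + (ω - τ) * (1 - qA t)) := by ring
  rw [this]
  have h1 : 0 ≤ ω - τ := by linarith
  have h2 : 0 ≤ 1 - qA t := by linarith
  have h3 : 0 < p - 1 := by linarith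
  positivity

/-- strict monotonicity of K -/
lemma qK_anti {ω p t₀ t₁ : ℝ} (hω : 0 < ω) (hp : 1 < p) (ht : 0 < t₀) (h : ω < t₀ ^ (p-1)) (h01 : t₀ < t₁) :
    qD ω p t₁ * qf ω p t₀ < qD ω p t₀ * qf ω p t₁ := by
  have ht1 : 0 < t₁ := ht.trans h01
  have hττ : t₀ ^ (p-1) < t₁ ^ (p-1) := Real.rpow_lt_rpow ht.le h01 (by linarith)
  have hA0 := qA_pos ht
  have hA1 := qA_pos ht1
  have hA01 := qA_anti (Set.mem_Ioi.2 ht) (Set.mem_Ioi.2 ht1) h01.le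
  have hs0 := qS_pos t₀
  have hs1 := qS_pos t₁
  simp only [qD]
  rw [qVH_eq ht, qVH_eq ht1, qf_eq ht, qf_eq ht1]
  have hm0 : 2 * t₀ ^ 2 / (1 + 2 * t₀ ^ 2) ≤ 1 := by
    rw [div_le_one (by positivity)]; linarith
  have hm : 2 * t₀ ^ 2 / (1 + 2 * t₀ ^ 2) ≤ 2 * t₁ ^ 2 / (1 + 2 * t₁ ^ 2) := by
    rw [div_le_div_iff₀ (by positivity) (by positivity)]
    nlinarith [mul_pos ht ht1]
  set m₀ := 2 * t₀ ^ 2 / (1 + 2 * t₀ ^ 2)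
  set m₁ := 2 * t₁ ^ 2 / (1 + 2 * t₁ ^ 2)
  set τ₀ := t₀ ^ (p-1)
  set τ₁ := t₁ ^ (p-1)
  set A₀ := qA t₀
  set A₁ := qA t₁
  have hb0 : 0 < τ₀ - ω := by linarith
  have hb1 : 0 < τ₁ - ω := by linarith
  have key : A₁ * (p * τ₁ - ω - (τ₁ - ω) * m₁) * (τ₀ - ω) < A₀ * (p * τ₀ - ω - (τ₀ - ω) * m₀) * (τ₁ - ω) := by
    have e1 : (p * τ₁ - ω - (τ₁ - ω) * m₁) * (τ₀ - ω) < (p * τ₀ - ω - (τ₀ - ω) * m₀) * (τ₁ - ω) := by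
      have a1 : (p * τ₁ - ω) * (τ₀ - ω) < (p * τ₀ - ω) * (τ₁ - ω) := by
        have : (p * τ₀ - ω) * (τ₁ - ω) - (p * τ₁ - ω) * (τ₀ - ω) = (p - 1) * ω * (τ₁ - τ₀) := by ring
        have h2 : 0 < (p - 1) * ω * (τ₁ - τ₀) := mul_pos (mul_pos (by linarith) hω) (by linarith)
        linarith
      have a2 : (τ₁ - ω) * (τ₀ - ω) * m₀ ≤ (τ₁ - ω) * (τ₀ - ω) * m₁ :=
        mul_le_mul_of_nonneg_left hm (by positivity)
      nlinarith
    have e2 : 0 < (p * τ₀ - ω - (τ₀ - ω) * m₀) := by nlinarith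
    calc A₁ * (p * τ₁ - ω - (τ₁ - ω) * m₁) * (τ₀ - ω) = A₁ * ((p * τ₁ - ω - (τ₁ - ω) * m₁) * (τ₀ - ω)) := by ring
      _ < A₁ * ((p * τ₀ - ω - (τ₀ - ω) * m₀) * (τ₁ - ω)) := mul_lt_mul_of_pos_left e1 hA1
      _ ≤ A₀ * ((p * τ₀ - ω - (τ₀ - ω) * m₀) * (τ₁ - ω)) := mul_le_mul_of_nonneg_right hA01 (by positivity)
      _ = _ := by ring
  have hc : 0 < (t₀ / qS t₀) * (t₁ / qS t₁) := by positivity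
  have := mul_lt_mul_of_pos_left key hc
  have e : ∀ X Y : ℝ, (A₀ * (t₀ / qS t₀) * X - (τ₀ - ω) * t₀ / qS t₀) * ((τ₁ - ω) * t₁ / qS t₁)
     - (A₁ * (t₁ / qS t₁) * Y - (τ₁ - ω) * t₁ / qS t₁) * ((τ₀ - ω) * t₀ / qS t₀)
     = t₀ / qS t₀ * (t₁ / qS t₁) * (A₀ * X * (τ₁ - ω)) - t₀ / qS t₀ * (t₁ / qS t₁) * (A₁ * Y * (τ₀ - ω)) := by
    intro X Y; ring
  have := e (p * τ₀ - ω - (τ₀ - ω) * m₀) (p * τ₁ - ω - (τ₁ - ω) * m₁)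
  linarith

/-- Pohozaev function -/
def qPi (M : ℝ) (ω p t : ℝ) : ℝ := M * qG ω p t - (M - 2) / 2 * (qH t * qf ω p t)

lemma qPi_eq (M : ℝ) {ω p t : ℝ} (hp : 1 < p) (ht : 0 < t) : qPi M ω p t =
    t ^ 2 * ((M / (p + 1) - (M - 2) / 2 * qA t) * (t ^ (p-1) - ω) - ω * (M / 2 - M / (p + 1))) := by
  have hs := (qS_pos t).ne'
  have h2 : p + 1 ≠ 0 := by linarith
  have h3 : t ^ (p + 1) = t ^ (p - 1) * t ^ 2 := by
    rw [Real.rpow_add_one ht.ne', rpow_split ht]; ring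
  rw [qPi, qG, qf_eq ht, qA, h3]
  field_simp
  ring

lemma qPi_up {M ω p t₀ t₁ : ℝ} (hM : 2 ≤ M) (hω : 0 < ω) (hp : 1 < p) (ht : 0 < t₀) (h01 : t₀ ≤ t₁)
    (h : 0 ≤ qPi M ω p t₀) : 0 ≤ qPi M ω p t₁ := by
  have ht1 : 0 < t₁ := ht.trans_le h01
  rw [qPi_eq M hp ht] at h
  rw [qPi_eq M hp ht1]
  have hττ : t₀ ^ (p-1) ≤ t₁ ^ (p-1) := Real.rpow_le_rpow ht.le h01 (by linarith)
  have hτ : 0 < t₀ ^ (p-1) := Real.rpow_pos_of_pos ht _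
  have hA01 := qA_anti (Set.mem_Ioi.2 ht) (Set.mem_Ioi.2 ht1) h01
  have hA0 := qA_le ht
  set τ₀ := t₀ ^ (p-1)
  set τ₁ := t₁ ^ (p-1)
  have h' := nonneg_of_mul_nonneg_right h (by positivity : (0:ℝ) < t₀ ^ 2)
  have hd : 0 < M / 2 - M / (p + 1) := by
    have : M / (p+1) < M / 2 := div_lt_div_of_pos_left (by linarith) (by norm_num) (by linarith)
    linarith
  have hX : (M / (p + 1) - (M - 2) / 2 * qA t₀) ≤ (M / (p + 1) - (M - 2) / 2 * qA t₁) := by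
    have : (M - 2) / 2 * qA t₁ ≤ (M - 2) / 2 * qA t₀ := mul_le_mul_of_nonneg_left hA01 (by linarith)
    linarith
  have hX2 : -(M / (p + 1) - (M - 2) / 2 * qA t₀) ≤ (M / 2 - M / (p + 1)) - 1 := by
    have : (M - 2) / 2 * qA t₀ ≤ (M - 2) / 2 * 1 := mul_le_mul_of_nonneg_left hA0 (by linarith)
    linarith
  set X₀ := M / (p + 1) - (M - 2) / 2 * qA t₀
  set X₁ := M / (p + 1) - (M - 2) / 2 * qA t₁
  set d := M / 2 - M / (p + 1)
  apply mul_nonneg (by positivity)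
  have hτω : ω < τ₀ := by
    by_contra hc
    push Not at hc
    have a1 : X₀ * (τ₀ - ω) = (-X₀) * (ω - τ₀) := by ring
    have a2 : (-X₀) * (ω - τ₀) ≤ d * (ω - τ₀) := mul_le_mul_of_nonneg_right (by linarith) (by linarith)
    nlinarith [mul_pos hd hτ]
  have hX0 : 0 < X₀ := by
    by_contra hc
    push Not at hc
    nlinarith [mul_pos hω hd, mul_nonneg (neg_nonneg.2 hc) (sub_pos.2 hτω).le]
  have : X₀ * (τ₀ - ω) ≤ X₁ * (τ₁ - ω) := mul_le_mul hX (by linarith) (by linarith) (by linarith)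
  linarith

end
end

section
open MeasureTheory Real Filter Topology
noncomputable section

structure RD (n : ℕ) (w w1 w2 z z1 z2 g V G : ℝ → ℝ) (C δ M rb : ℝ) : Prop where
  hw : ∀ r, HasDerivAt w (w1 r) r
  hw1 : ∀ r, HasDerivAt w1 (w2 r) r
  hw2c : Continuous w2
  hz : ∀ r, HasDerivAt z (z1 r) r
  hz1 : ∀ r, HasDerivAt z1 (z2 r) r
  odew : ∀ r, 0 < r → r * w2 r + n * w1 r + r * g r = 0
  odez : ∀ r, 0 < r → r * z2 r + n * z1 r + r * (V r * z r) = 0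
  hg : ∀ r, HasDerivAt g (V r * w1 r) r
  hG : ∀ r, HasDerivAt G (g r * w1 r) r
  z10 : z1 0 = 0
  w10 : w1 0 = 0
  w20 : w2 0 ≠ 0
  wpos : ∀ r, 0 ≤ r → 0 < w r
  w1neg : ∀ r, 0 < r → w1 r < 0
  hδ : 0 < δ
  hC : 0 ≤ C
  dw : ∀ r, 0 ≤ r → |w r| ≤ C * exp (-δ * r)
  dw1 : ∀ r, 0 ≤ r → |w1 r| ≤ C * exp (-δ * r)
  dw2 : ∀ r, 0 ≤ r → |w2 r| ≤ C * exp (-δ * r)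
  dG : ∀ r, 0 ≤ r → |G r| ≤ C * exp (-δ * r)
  dg : ∀ r, 0 ≤ r → |g r| ≤ C * exp (-δ * r)
  zint : IntegrableOn (fun r => r ^ n * (z r ^ 2 + z1 r ^ 2)) (Set.Ioi 0)
  Vb : ∀ r, 0 ≤ r → |V r| ≤ M
  hrb : 0 < rb
  gpos : ∀ r, 0 < r → r < rb → 0 < g r
  grb : g rb = 0
  gneg : ∀ r, rb < r → g r < 0
  hD : ∀ r, rb ≤ r → 0 < V r * w r - g r
  hK : ∀ r0 r1, 0 < r1 → r1 < r0 → r0 < rb →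
    (V r1 * w r1 - g r1) * g r0 < (V r0 * w r0 - g r0) * g r1
  hPi : 1 ≤ n → ∀ r0 r1, 0 < r1 → r1 ≤ r0 →
    0 ≤ ((n:ℝ) + 1) * G r0 - ((n:ℝ) - 1) / 2 * (w r0 * g r0) →
    0 ≤ ((n:ℝ) + 1) * G r1 - ((n:ℝ) - 1) / 2 * (w r1 * g r1)

lemma poly_exp_bound (k : ℕ) {δ : ℝ} (hδ : 0 < δ) :
    ∃ K, 0 ≤ K ∧ ∀ r, 0 ≤ r → (1 + r) ^ k * exp (-δ * r) ≤ K := by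
  refine ⟨k.factorial * exp δ / δ ^ k, by positivity, fun r hr => ?_⟩
  have h := Real.pow_div_factorial_le_exp (δ * (1 + r)) (by positivity) k
  rw [div_le_iff₀ (by positivity), mul_pow, show δ * (1 + r) = δ + δ * r by ring, exp_add] at h
  rw [le_div_iff₀ (by positivity), neg_mul, exp_neg]
  have : (0:ℝ) < exp (δ * r) := exp_pos _
  rw [← div_eq_mul_inv, div_mul_eq_mul_div, div_le_iff₀ this]
  linarith

namespace RD
variable {n : ℕ} {w w1 w2 z z1 z2 g V G : ℝ → ℝ} {C δ M rb : ℝ}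

lemma uniq (h : RD n w w1 w2 z z1 z2 g V G C δ M rb) (h0 : z 0 = 0) : ∀ r, 0 ≤ r → z r = 0 := by
  have hd : ∀ r, HasDerivAt (fun r => (z r ^ 2 + z1 r ^ 2) * exp (-(1 + M) * r))
      ((2 * z r * z1 r + 2 * z1 r * z2 r - (1 + M) * (z r ^ 2 + z1 r ^ 2)) * exp (-(1 + M) * r)) r := by
    intro r
    have h1 := ((h.hz r).pow 2).add ((h.hz1 r).pow 2)
    have h2 : HasDerivAt (fun r => exp (-(1 + M) * r)) (exp (-(1 + M) * r) * (-(1 + M))) r := by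
      have := ((hasDerivAt_id r).const_mul (-(1 + M))).exp
      refine this.congr_deriv ?_; simp
    refine (h1.mul h2).congr_deriv ?_
    simp; ring
  have hanti : AntitoneOn (fun r => (z r ^ 2 + z1 r ^ 2) * exp (-(1 + M) * r)) (Set.Ici 0) := by
    apply antitoneOn_of_deriv_nonpos (convex_Ici 0)
    · exact fun x _ => (hd x).continuousAt.continuousWithinAt
    · exact fun x _ => (hd x).differentiableAt.differentiableWithinAt
    · intro r hr
      have hr : 0 < r := by simpa using hr
      rw [(hd r).deriv]
      apply mul_nonpos_of_nonpos_of_nonneg _ (exp_pos _).le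
      have ode := h.odez r hr
      have hV := h.Vb r hr.le
      have e2 : z2 r = -(n * z1 r / r) - V r * z r := by field_simp; linarith
      have e3 : 2 * z1 r * z2 r = - (2 * n * z1 r ^ 2 / r) - 2 * V r * (z r * z1 r) := by
        rw [e2]; ring
      have p1 : 0 ≤ 2 * n * z1 r ^ 2 / r := by positivity
      have p2 : -(2 * V r * (z r * z1 r)) ≤ M * (z r ^ 2 + z1 r ^ 2) := by
        have a1 : -(2 * V r * (z r * z1 r)) ≤ |V r| * (2 * |z r| * |z1 r|) := by
          have := neg_abs_le (V r * (z r * z1 r))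
          rw [abs_mul, abs_mul] at this
          linarith
        have a2 : 2 * |z r| * |z1 r| ≤ z r ^ 2 + z1 r ^ 2 := by
          rw [← sq_abs (z r), ← sq_abs (z1 r)]; exact two_mul_le_add_sq _ _
        calc _ ≤ _ := a1
          _ ≤ |V r| * (z r ^ 2 + z1 r ^ 2) := mul_le_mul_of_nonneg_left a2 (abs_nonneg _)
          _ ≤ _ := mul_le_mul_of_nonneg_right hV (by positivity)
      nlinarith [sq_nonneg (z r - z1 r)]
  intro r hr
  have := hanti (Set.mem_Ici.2 le_rfl) (Set.mem_Ici.2 hr) hr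
  simp only [h0, h.z10] at this
  have h3 : z r ^ 2 + z1 r ^ 2 ≤ 0 := by
    by_contra hc
    push Not at hc
    have := mul_pos hc (exp_pos (-(1 + M) * r))
    norm_num at *
    linarith
  nlinarith [sq_nonneg (z r), sq_nonneg (z1 r)]

lemma hasDerivB (h : RD n w w1 w2 z z1 z2 g V G C δ M rb) {θ θ1 : ℝ → ℝ} {r t2 φ : ℝ} (hr : 0 < r)
    (h1 : HasDerivAt θ (θ1 r) r) (h2 : HasDerivAt θ1 t2 r)
    (hL : r * t2 + n * θ1 r + r * (V r * θ r) = r * φ) :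
    HasDerivAt (fun r => r ^ n * (z r * θ1 r - z1 r * θ r)) (r ^ n * (z r * φ)) r := by
  have h3 := ((h.hz r).mul h2).sub ((h.hz1 r).mul h1)
  have h4 := (hasDerivAt_pow n r).mul h3
  refine h4.congr_deriv ?_
  have ode := h.odez r hr
  simp only [Pi.sub_apply, Pi.mul_apply]
  have hpow : (n:ℝ) * r ^ (n-1) * r = n * r ^ n := by
    cases n with
    | zero => simp
    | succ k => simp [pow_succ]; ring
  have : r * ((n:ℝ) * r ^ (n - 1) * (z r * θ1 r - z1 r * θ r) +
      r ^ n * (z1 r * θ1 r + z r * t2 - (z2 r * θ r + z1 r * θ1 r))) = r * (r ^ n * (z r * φ)) := by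
    calc _ = (n * r ^ (n-1) * r) * (z r * θ1 r - z1 r * θ r) + r ^ n * (z r * (r * t2) - r * z2 r * θ r) := by ring
      _ = r ^ n * (z r * (r * t2 + n * θ1 r) - (r * z2 r + n * z1 r) * θ r) := by rw [hpow]; ring
      _ = r ^ n * (z r * (r * φ - r * (V r * θ r)) - (- (r * (V r * z r))) * θ r) := by
          rw [show r * t2 + n * θ1 r = r * φ - r * (V r * θ r) by linarith,
            show r * z2 r + n * z1 r = - (r * (V r * z r)) by linarith]
      _ = _ := by ring
  exact mul_left_cancel₀ hr.ne' this

lemma noint (h : RD n w w1 w2 z z1 z2 g V G C δ M rb) {θ θ1 : ℝ → ℝ} {K : ℝ}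
    (b0 : ∀ r, 0 ≤ r → |θ r| ≤ K * ((1 + r) * exp (-δ * r)))
    (b1 : ∀ r, 0 ≤ r → |θ1 r| ≤ K * ((1 + r) * exp (-δ * r))) {a c : ℝ} (ha : 0 ≤ a) (hc : 0 < c)
    (hB : ∀ r, a < r → c ≤ |r ^ n * (z r * θ1 r - z1 r * θ r)|) : False := by
  obtain ⟨L, hL, hLb⟩ := poly_exp_bound (n + 2) h.hδ
  have hK : 0 ≤ K := by
    have := (abs_nonneg _).trans (b0 0 le_rfl)
    simpa using this
  have hint1 : IntegrableOn (fun r => r ^ n * (z r ^ 2 + z1 r ^ 2)) (Set.Ioi a) :=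
    h.zint.mono_set (Set.Ioi_subset_Ioi ha)
  have hint2 : IntegrableOn (fun r => (K ^ 2 * L) * exp (-δ * r)) (Set.Ioi a) :=
    (integrableOn_exp_mul_Ioi (by linarith [h.hδ]) a).const_mul _
  have hint := hint1.add hint2
  have hcint : IntegrableOn (fun _ : ℝ => c) (Set.Ioi a) := by
    refine Integrable.mono' hint aestronglyMeasurable_const ?_
    refine (ae_restrict_iff' measurableSet_Ioi).2 (Filter.Eventually.of_forall fun r hr => ?_)
    have hr : a < r := hr
    have hr0 : 0 ≤ r := ha.trans hr.le
    rw [Real.norm_of_nonneg hc.le]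
    refine (hB r hr).trans ?_
    rw [abs_mul, abs_of_nonneg (by positivity : 0 ≤ r ^ n)]
    have q0 := b0 r hr0
    have q1 := b1 r hr0
    set T := K * ((1 + r) * exp (-δ * r))
    have hT : T ^ 2 = K ^ 2 * ((1 + r) ^ 2 * exp (-δ * r)) * exp (-δ * r) := by simp only [T]; ring
    have q2 : |z r * θ1 r - z1 r * θ r| ≤ (z r ^ 2 + z1 r ^ 2) + T ^ 2 := by
      have a1 : |z r * θ1 r - z1 r * θ r| ≤ |z r| * T + |z1 r| * T := by
        refine (abs_sub _ _).trans ?_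
        rw [abs_mul, abs_mul]
        gcongr
      have := sq_abs (z r)
      have := sq_abs (z1 r)
      nlinarith [sq_nonneg (|z r| - T / 2), sq_nonneg (|z1 r| - T / 2), sq_nonneg (|z r|), sq_nonneg T]
    have q3 : r ^ n * ((1 + r) ^ 2 * exp (-δ * r)) ≤ L := by
      refine le_trans ?_ (hLb r hr0)
      rw [pow_add, mul_assoc]
      gcongr
      linarith
    calc r ^ n * |z r * θ1 r - z1 r * θ r| ≤ r ^ n * ((z r ^ 2 + z1 r ^ 2) + T ^ 2) := by gcongr
      _ = r ^ n * (z r ^ 2 + z1 r ^ 2) + K ^ 2 * (r ^ n * ((1 + r) ^ 2 * exp (-δ * r))) * exp (-δ * r) := by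
        rw [hT]; ring
      _ ≤ r ^ n * (z r ^ 2 + z1 r ^ 2) + K ^ 2 * L * exp (-δ * r) := by gcongr
  rw [integrableOn_const_iff] at hcint
  rcases hcint with hcint | hcint
  · exact hc.ne' (by simpa using hcint)
  · simp at hcint

lemma first_zero {f : ℝ → ℝ} (hf : Continuous f) {a b : ℝ} (hab : a ≤ b) (ha : 0 < f a) (hb : f b ≤ 0) :
    ∃ c, a < c ∧ c ≤ b ∧ f c = 0 ∧ ∀ r, a ≤ r → r < c → 0 < f r := by
  set s := {r | a ≤ r ∧ f r ≤ 0}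
  have hs : IsClosed s := (isClosed_le continuous_const continuous_id).inter (isClosed_le hf continuous_const)
  have hne : s.Nonempty := ⟨b, hab, hb⟩
  have hbd : BddBelow s := ⟨a, fun x hx => hx.1⟩
  have hm := hs.csInf_mem hne hbd
  set c := sInf s
  have hlt : ∀ r, a ≤ r → r < c → 0 < f r := by
    intro r h1 h2
    by_contra hc
    exact absurd (csInf_le hbd (show r ∈ s from ⟨h1, not_lt.1 hc⟩)) (not_le.2 h2)
  have hac : a < c := by
    rcases hm.1.lt_or_eq with h | h
    · exact h
    · exfalso; have := hm.2; rw [← h] at this; linarith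
  refine ⟨c, hac, csInf_le hbd ⟨hab, hb⟩, le_antisymm hm.2 ?_, hlt⟩
  have : Tendsto f (𝓝[<] c) (𝓝 (f c)) := hf.continuousAt.tendsto.mono_left nhdsWithin_le_nhds
  refine ge_of_tendsto this ?_
  filter_upwards [Ioo_mem_nhdsLT hac] with r hr
  exact (hlt r hr.1.le hr.2).le

lemma tail (h : RD n w w1 w2 z z1 z2 g V G C δ M rb) {ρ : ℝ} (z0 : z ρ = 0) (hz1 : z1 ρ < 0) :
    (∀ r, ρ < r → z r < 0) ∨ ∃ ρ2, ρ < ρ2 ∧ (∀ r, ρ < r → r < ρ2 → z r < 0) ∧ z ρ2 = 0 ∧ 0 ≤ z1 ρ2 := by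
  have hzc : Continuous z := continuous_iff_continuousAt.2 fun r => (h.hz r).continuousAt
  by_cases hall : ∀ r, ρ < r → z r < 0
  · exact Or.inl hall
  right
  push Not at hall
  obtain ⟨b, hb, hzb⟩ := hall
  have hnear : ∀ᶠ r in 𝓝[>] ρ, z r < 0 := by
    have := (hasDerivAt_iff_tendsto_slope.1 (h.hz ρ)).mono_left
      (nhdsWithin_mono ρ (fun x (hx : ρ < x) => (ne_of_gt hx : x ≠ ρ)))
    have h2 := this.eventually (gt_mem_nhds hz1)
    filter_upwards [h2, self_mem_nhdsWithin] with r hr hr2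
    have hr2 : ρ < r := hr2
    rw [slope_def_field, z0, sub_zero, div_neg_iff] at hr
    rcases hr with hr | hr
    · linarith
    · exact hr.1
  obtain ⟨a, ha, hsub⟩ := (mem_nhdsGT_iff_exists_Ioo_subset).1 hnear
  have ha : ρ < a := ha
  set a' := min ((ρ + a)/2) ((ρ+b)/2)
  have ha' : ρ < a' := lt_min (by linarith) (by linarith)
  have ha'2 : a' < a := (min_le_left _ _).trans_lt (by linarith)
  have ha'3 : a' ≤ b := (min_le_right _ _).trans (by linarith)
  obtain ⟨c, hc1, hc2, hc3, hc4⟩ := first_zero (f := fun r => - z r) hzc.neg ha'3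
    (by have : z a' < 0 := hsub ⟨ha', ha'2⟩
        linarith) (by simpa using hzb)
  have hneg : ∀ r, ρ < r → r < c → z r < 0 := by
    intro r h1 h2
    rcases lt_or_ge r a' with h3 | h3
    · exact hsub ⟨h1, h3.trans ha'2⟩
    · have := hc4 r h3 h2; linarith
  have hzc0 : z c = 0 := by linarith
  refine ⟨c, ha'.trans hc1, hneg, hzc0, ?_⟩
  have : Tendsto (slope z c) (𝓝[<] c) (𝓝 (z1 c)) := (hasDerivAt_iff_tendsto_slope.1 (h.hz c)).mono_left
      (nhdsWithin_mono c (fun x (hx : x < c) => (ne_of_lt hx : x ≠ c)))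
  refine ge_of_tendsto this ?_
  filter_upwards [Ioo_mem_nhdsLT (ha'.trans hc1)] with r hr
  rw [slope_def_field, hzc0, sub_zero]
  exact (div_pos_of_neg_of_neg (hneg r hr.1 hr.2) (by linarith [hr.2])).le

lemma tail_contra (h : RD n w w1 w2 z z1 z2 g V G C δ M rb) {ρ : ℝ} (hρ : 0 < ρ) (z0 : z ρ = 0) (hz1 : z1 ρ < 0)
    {θ θ1 θ2 φ : ℝ → ℝ} {K : ℝ}
    (b0 : ∀ r, 0 ≤ r → |θ r| ≤ K * ((1 + r) * exp (-δ * r)))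
    (b1 : ∀ r, 0 ≤ r → |θ1 r| ≤ K * ((1 + r) * exp (-δ * r)))
    (h1 : ∀ r, 0 < r → HasDerivAt θ (θ1 r) r) (h2 : ∀ r, 0 < r → HasDerivAt θ1 (θ2 r) r)
    (hL : ∀ r, 0 < r → r * θ2 r + n * θ1 r + r * (V r * θ r) = r * φ r)
    (hθ : ∀ r, ρ ≤ r → 0 ≤ θ r) (hφ : ∀ r, ρ < r → φ r < 0) : False := by
  have hB : ∀ r, 0 < r → HasDerivAt (fun r => r ^ n * (z r * θ1 r - z1 r * θ r)) (r ^ n * (z r * φ r)) r :=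
    fun r hr => h.hasDerivB hr (h1 r hr) (h2 r hr) (hL r hr)
  have hBρ : 0 ≤ ρ ^ n * (z ρ * θ1 ρ - z1 ρ * θ ρ) := by
    rw [z0, show ρ ^ n * (0 * θ1 ρ - z1 ρ * θ ρ) = ρ ^ n * (-z1 ρ * θ ρ) by ring]
    have := hθ ρ le_rfl
    have h3 : 0 ≤ -z1 ρ := by linarith
    positivity
  rcases h.tail z0 hz1 with ht | ⟨ρ2, hlt, ht, hz2, hz12⟩
  · have hmono : StrictMonoOn (fun r => r ^ n * (z r * θ1 r - z1 r * θ r)) (Set.Ici ρ) := by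
      apply strictMonoOn_of_deriv_pos (convex_Ici ρ)
      · exact fun r hr => (hB r (hρ.trans_le hr)).continuousAt.continuousWithinAt
      · intro r hr
        have hr : ρ < r := by simpa using hr
        rw [(hB r (hρ.trans hr)).deriv]
        exact mul_pos (pow_pos (hρ.trans hr) n) (mul_pos_of_neg_of_neg (ht r hr) (hφ r hr))
    have hc : 0 < (ρ+1) ^ n * (z (ρ+1) * θ1 (ρ+1) - z1 (ρ+1) * θ (ρ+1)) :=
      hBρ.trans_lt (hmono (Set.mem_Ici.2 le_rfl) (Set.mem_Ici.2 (by linarith)) (by linarith))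
    refine h.noint b0 b1 (a := ρ + 1) (by linarith) hc fun r hr => le_trans ?_ (le_abs_self _)
    exact (hmono (Set.mem_Ici.2 (by linarith)) (Set.mem_Ici.2 (by linarith)) hr).le
  · have hmono : StrictMonoOn (fun r => r ^ n * (z r * θ1 r - z1 r * θ r)) (Set.Icc ρ ρ2) := by
      apply strictMonoOn_of_deriv_pos (convex_Icc ρ ρ2)
      · exact fun r hr => (hB r (hρ.trans_le hr.1)).continuousAt.continuousWithinAt
      · intro r hr
        rw [interior_Icc] at hr
        have hr0 := hρ.trans hr.1
        rw [(hB r hr0).deriv]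
        exact mul_pos (pow_pos hr0 n) (mul_pos_of_neg_of_neg (ht r hr.1 hr.2) (hφ r hr.1))
    have h5 := hmono ⟨le_rfl, hlt.le⟩ ⟨hlt.le, le_rfl⟩ hlt
    simp only at h5
    have h6 : ρ2 ^ n * (z ρ2 * θ1 ρ2 - z1 ρ2 * θ ρ2) ≤ 0 := by
      rw [hz2, show ρ2 ^ n * (0 * θ1 ρ2 - z1 ρ2 * θ ρ2) = -(ρ2 ^ n * (z1 ρ2 * θ ρ2)) by ring]
      have := hθ ρ2 hlt.le
      have : 0 < ρ2 := hρ.trans hlt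
      have : 0 ≤ ρ2 ^ n * (z1 ρ2 * θ ρ2) := by positivity
      linarith
    linarith

end RD
end
end

section
open MeasureTheory Real Filter Topology
noncomputable section
namespace RD
variable {n : ℕ} {w w1 w2 z z1 z2 g V G : ℝ → ℝ} {C δ M rb : ℝ}

lemma hw2 (h : RD n w w1 w2 z z1 z2 g V G C δ M rb) {r : ℝ} (hr : 0 < r) :
    HasDerivAt w2 (n * w1 r / r ^ 2 - n * w2 r / r - V r * w1 r) r := by
  have h1 : HasDerivAt (fun r => -(n * w1 r / r) - g r) (n * w1 r / r ^ 2 - n * w2 r / r - V r * w1 r) r := by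
    have := ((((h.hw1 r).const_mul (n:ℝ)).div (hasDerivAt_id r) hr.ne').neg).sub (h.hg r)
    refine this.congr_deriv ?_
    simp only [id]
    field_simp
    ring
  refine h1.congr_of_eventuallyEq ?_
  filter_upwards [lt_mem_nhds hr] with s hs
  have := h.odew s hs
  field_simp
  linarith

lemma bw1 (h : RD n w w1 w2 z z1 z2 g V G C δ M rb) {r : ℝ} (hr : 0 ≤ r) :
    |w1 r| ≤ C * ((1 + r) * exp (-δ * r)) := by
  refine (h.dw1 r hr).trans ?_
  have := h.hC
  gcongr
  nlinarith [exp_pos (-δ * r)]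

lemma bw2 (h : RD n w w1 w2 z z1 z2 g V G C δ M rb) {r : ℝ} (hr : 0 ≤ r) :
    |w2 r| ≤ C * ((1 + r) * exp (-δ * r)) := by
  refine (h.dw2 r hr).trans ?_
  have := h.hC
  gcongr
  nlinarith [exp_pos (-δ * r)]

lemma comb (h : RD n w w1 w2 z z1 z2 g V G C δ M rb) {r X Y : ℝ} (hr : 0 ≤ r) {a b : ℝ} (ha : 0 ≤ a) (hb : 0 ≤ b)
    (hba : b ≤ a)
    (hX : |X| ≤ C * exp (-δ * r)) (hY : |Y| ≤ C * exp (-δ * r)) :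
    |-(a * X + b * (r * Y))| ≤ (a * C) * ((1 + r) * exp (-δ * r)) := by
  rw [abs_neg]
  have e := exp_pos (-δ * r)
  have hC := h.hC
  have h1 : |a * X + b * (r * Y)| ≤ a * |X| + b * (r * |Y|) := by
    refine (abs_add_le _ _).trans ?_
    simp [abs_mul, abs_of_nonneg ha, abs_of_nonneg hb, abs_of_nonneg hr]
  calc _ ≤ _ := h1
    _ ≤ a * (C * exp (-δ * r)) + a * (r * (C * exp (-δ * r))) := by gcongr
    _ = _ := by ring

/-- any decaying quantity tends to zero, with polynomial factor -/
lemma tend (h : RD n w w1 w2 z z1 z2 g V G C δ M rb) {X : ℝ → ℝ} (k : ℕ) {K : ℝ} 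
    (hX : ∀ r, 0 ≤ r → |X r| ≤ K * ((1 + r) ^ k * exp (-δ * r))) : Tendsto X atTop (𝓝 0) := by
  have hK : 0 ≤ K := by
    have := (abs_nonneg _).trans (hX 0 le_rfl)
    simpa using this
  obtain ⟨L, hL, hLb⟩ := poly_exp_bound k (half_pos h.hδ)
  have h1 : Tendsto (fun r => K * L * exp (-(δ/2) * r)) atTop (𝓝 0) := by
    have : Tendsto (fun r => exp (-(δ/2) * r)) atTop (𝓝 0) := by
      apply Real.tendsto_exp_atBot.comp
      exact tendsto_id.const_mul_atTop_of_neg (by linarith [h.hδ])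
    simpa using this.const_mul (K * L)
  refine squeeze_zero_norm' ?_ h1
  filter_upwards [eventually_ge_atTop 0] with r hr
  have e : exp (-δ * r) = exp (-(δ/2) * r) * exp (-(δ/2) * r) := by rw [← exp_add]; ring_nf
  calc _ ≤ _ := hX r hr
    _ = K * ((1 + r) ^ k * exp (-(δ/2) * r)) * exp (-(δ/2) * r) := by rw [e]; ring
    _ ≤ _ := by gcongr; exact hLb r hr

lemma P_nonneg (h : RD n w w1 w2 z z1 z2 g V G C δ M rb) (hn : 1 ≤ n) {r : ℝ} (hr : 0 < r) :
    0 ≤ r ^ (n+1) * (w1 r ^ 2 / 2 + G r) + ((n:ℝ) - 1) / 2 * (r ^ n * (w r * w1 r)) := by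
  set P := fun r => r ^ (n+1) * (w1 r ^ 2 / 2 + G r) + ((n:ℝ) - 1) / 2 * (r ^ n * (w r * w1 r)) with hP
  change 0 ≤ P r
  have hd0 : ∀ r, HasDerivAt P (((n:ℝ)+1) * r ^ n * (w1 r ^ 2 / 2 + G r) + r ^ (n+1) * (w1 r * w2 r + g r * w1 r)
     + ((n:ℝ) - 1) / 2 * (n * r ^ (n-1) * (w r * w1 r) + r ^ n * (w1 r * w1 r + w r * w2 r))) r := by
    intro r
    have h1 := (hasDerivAt_pow (n+1) r).mul ((((h.hw1 r).pow 2).div_const 2).add (h.hG r))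
    have h2 := ((hasDerivAt_pow n r).mul ((h.hw r).mul (h.hw1 r))).const_mul (((n:ℝ) - 1) / 2)
    refine (h1.add h2).congr_deriv ?_
    simp only [Pi.mul_apply, Pi.add_apply, Pi.pow_apply]
    push_cast
    simp only [Nat.add_sub_cancel, pow_one, Nat.reduceSub]
    ring
  have hd : ∀ r, 0 < r → HasDerivAt P (r ^ n * (((n:ℝ) + 1) * G r - ((n:ℝ) - 1) / 2 * (w r * g r))) r := by
    intro r hr
    refine (hd0 r).congr_deriv ?_
    have ode := h.odew r hr
    obtain ⟨k, rfl⟩ : ∃ k, n = k + 1 := ⟨n - 1, by omega⟩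
    have e : w2 r = -(((k+1:ℕ):ℝ) * w1 r / r) - g r := by field_simp; linarith
    rw [e]
    simp only [Nat.add_sub_cancel]
    push_cast
    field_simp
    ring
  have hcont : Continuous P := continuous_iff_continuousAt.2 fun r => (hd0 r).continuousAt
  by_cases hs : 0 ≤ ((n:ℝ) + 1) * G r - ((n:ℝ) - 1) / 2 * (w r * g r)
  · have : MonotoneOn P (Set.Icc 0 r) := by
      apply monotoneOn_of_deriv_nonneg (convex_Icc 0 r) hcont.continuousOn
      · exact fun x _ => (hd0 x).differentiableAt.differentiableWithinAt
      · intro x hx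
        rw [interior_Icc] at hx
        rw [(hd x hx.1).deriv]
        exact mul_nonneg (pow_nonneg hx.1.le n) (h.hPi hn r x hx.1 hx.2.le hs)
    have h2 := this ⟨le_rfl, hr.le⟩ ⟨hr.le, le_rfl⟩ hr.le
    have : P 0 = 0 := by
      simp only [hP]
      rw [zero_pow (by omega), zero_pow (by omega)]; ring
    linarith
  · push Not at hs
    have : AntitoneOn P (Set.Ici r) := by
      apply antitoneOn_of_deriv_nonpos (convex_Ici r) hcont.continuousOn
      · exact fun x _ => (hd0 x).differentiableAt.differentiableWithinAt
      · intro x hx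
        have hx : r < x := by simpa using hx
        rw [(hd x (hr.trans hx)).deriv]
        apply mul_nonpos_of_nonneg_of_nonpos (pow_nonneg (hr.trans hx).le n)
        by_contra hc
        push Not at hc
        have := h.hPi hn x r hr hx.le hc.le
        linarith
    have ht : Tendsto P atTop (𝓝 0) := by
      refine h.tend (n+1) (K := C ^ 2 + C + |((n:ℝ)-1)/2| * C ^ 2) fun r hr => ?_
      have hC := h.hC
      have e1 := exp_pos (-δ * r)
      have e2 : exp (-δ * r) ≤ 1 := by
        rw [exp_le_one_iff]; nlinarith [h.hδ]
      have b0 := h.dw r hr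
      have b1 := h.dw1 r hr
      have b2 := h.dG r hr
      have hX : ∀ X Y : ℝ, |X| ≤ C * exp (-δ * r) → |Y| ≤ C * exp (-δ * r) → |X * Y| ≤ C ^ 2 * exp (-δ * r) := by
        intro X Y hX hY
        rw [abs_mul]
        calc |X| * |Y| ≤ (C * exp (-δ * r)) * (C * exp (-δ * r)) := by gcongr
          _ ≤ (C * exp (-δ * r)) * (C * 1) := by gcongr
          _ = _ := by ring
      have q1 : |r ^ (n+1) * (w1 r ^ 2 / 2 + G r)| ≤ (1 + r) ^ (n+1) * ((C ^ 2 + C) * exp (-δ * r)) := by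
        rw [abs_mul, abs_of_nonneg (by positivity : 0 ≤ r ^ (n+1))]
        have := hX _ _ b1 b1
        gcongr
        · linarith
        · refine (abs_add_le _ _).trans ?_
          rw [abs_div, abs_of_pos (by norm_num : (0:ℝ) < 2), sq]
          have := abs_nonneg (w1 r * w1 r)
          linarith
      have q2 : |((n:ℝ) - 1) / 2 * (r ^ n * (w r * w1 r))| ≤ (1 + r) ^ (n+1) * (|((n:ℝ)-1)/2| * C ^ 2 * exp (-δ * r)) := by
        rw [abs_mul, abs_mul (r ^ n), abs_of_nonneg (by positivity : 0 ≤ r ^ n)]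
        have h1 := hX _ _ b0 b1
        have h2 : r ^ n ≤ (1 + r) ^ (n+1) := by
          calc r ^ n ≤ (1 + r) ^ n := by gcongr; linarith
            _ ≤ (1 + r) ^ (n+1) := pow_le_pow_right₀ (by linarith) (by omega)
        calc _ ≤ |((n:ℝ) - 1) / 2| * ((1 + r) ^ (n+1) * (C ^ 2 * exp (-δ * r))) := by gcongr
          _ = _ := by ring
      refine (abs_add_le _ _).trans ((add_le_add q1 q2).trans (le_of_eq ?_))
      ring
    refine le_of_tendsto ht ?_
    filter_upwards [eventually_ge_atTop r] with x hx
    exact this (Set.mem_Ici.2 le_rfl) (Set.mem_Ici.2 hx) hx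

lemma contB (h : RD n w w1 w2 z z1 z2 g V G C δ M rb) {θ θ1 : ℝ → ℝ} (h0 : Continuous θ) (h1 : Continuous θ1) :
    Continuous (fun r => r ^ n * (z r * θ1 r - z1 r * θ r)) := by
  have hzc : Continuous z := continuous_iff_continuousAt.2 fun r => (h.hz r).continuousAt
  have hz1c : Continuous z1 := continuous_iff_continuousAt.2 fun r => (h.hz1 r).continuousAt
  fun_prop

lemma main_pos (h : RD n w w1 w2 z z1 z2 g V G C δ M rb) (hn : 1 ≤ n) (hz0 : 0 < z 0) : False := by
  have hzc : Continuous z := continuous_iff_continuousAt.2 fun r => (h.hz r).continuousAt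
  have hwc : Continuous w := continuous_iff_continuousAt.2 fun r => (h.hw r).continuousAt
  have hw1c : Continuous w1 := continuous_iff_continuousAt.2 fun r => (h.hw1 r).continuousAt
  have hn0 : n ≠ 0 := by omega
  have hnpos : (0:ℝ) < n := by exact_mod_cast hn
  -- B1
  set B1 := fun r => r ^ n * (z r * w2 r - z1 r * w1 r) with hB1
  have hB1d : ∀ r, 0 < r → HasDerivAt B1 (r ^ n * (z r * (n * w1 r / r ^ 2))) r := by
    intro r hr
    refine h.hasDerivB hr (h.hw1 r) (h.hw2 hr) ?_
    field_simp; ring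
  have hB1c : Continuous B1 := h.contB hw1c h.hw2c
  have hB10 : B1 0 = 0 := by simp [hB1, hn0]
  have hB1neg : ∀ r, 0 < r → z r > 0 → r ^ n * (z r * (n * w1 r / r ^ 2)) < 0 := by
    intro r hr hzr
    apply mul_neg_of_pos_of_neg (pow_pos hr n)
    apply mul_neg_of_pos_of_neg hzr
    exact div_neg_of_neg_of_pos (mul_neg_of_pos_of_neg hnpos (h.w1neg r hr)) (by positivity)
  have hex : ∃ b, 0 ≤ b ∧ z b ≤ 0 := by
    by_contra hc
    push Not at hc
    have hanti : StrictAntiOn B1 (Set.Ici 0) := by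
      apply strictAntiOn_of_deriv_neg (convex_Ici 0) hB1c.continuousOn
      intro r hr
      have hr : 0 < r := by simpa using hr
      rw [(hB1d r hr).deriv]
      exact hB1neg r hr (hc r hr.le)
    have h1 : B1 1 < 0 := by
      rw [← hB10]; exact hanti (Set.mem_Ici.2 le_rfl) (Set.mem_Ici.2 zero_le_one) one_pos
    refine h.noint (θ := w1) (θ1 := w2) (K := C) (fun r => h.bw1) (fun r => h.bw2) (a := 1) zero_le_one
      (neg_pos.2 h1) fun r hr => ?_
    have : B1 r < B1 1 := hanti (Set.mem_Ici.2 zero_le_one) (Set.mem_Ici.2 (by linarith)) hr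
    rw [abs_of_neg (this.trans h1)]
    exact neg_le_neg this.le
  obtain ⟨b, hb0, hzb⟩ := hex
  obtain ⟨ρ, hρ, -, hzρ, hpos⟩ := first_zero hzc hb0 hz0 hzb
  have hw1ρ := h.w1neg ρ hρ
  have hρn : 0 < ρ ^ n := pow_pos hρ n
  have hz1ρ : z1 ρ < 0 := by
    have hanti : StrictAntiOn B1 (Set.Icc 0 ρ) := by
      apply strictAntiOn_of_deriv_neg (convex_Icc 0 ρ) hB1c.continuousOn
      intro r hr
      rw [interior_Icc] at hr
      rw [(hB1d r hr.1).deriv]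
      exact hB1neg r hr.1 (hpos r hr.1.le hr.2)
    have h1 := hanti ⟨le_rfl, hρ.le⟩ ⟨hρ.le, le_rfl⟩ hρ
    rw [hB10] at h1
    simp only [hB1, hzρ] at h1
    by_contra hc
    push Not at hc
    have : 0 ≤ ρ ^ n * (z1 ρ * (-w1 ρ)) := mul_nonneg hρn.le (mul_nonneg hc (by linarith))
    linarith
  have hθd : ∀ (a b : ℝ) r, HasDerivAt (fun r => -(a * w r + b * (r * w1 r)))
      (-((a + b) * w1 r + b * (r * w2 r))) r := by
    intro a b r
    have := (((h.hw r).const_mul a).add (((hasDerivAt_id r).mul (h.hw1 r)).const_mul b)).neg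
    refine this.congr_deriv ?_
    simp only [id]; ring
  have hθ1d : ∀ (a b : ℝ) r, 0 < r → HasDerivAt (fun r => -((a + b) * w1 r + b * (r * w2 r)))
      (-((a + b) * w2 r + b * (w2 r + r * (n * w1 r / r ^ 2 - n * w2 r / r - V r * w1 r)))) r := by
    intro a b r hr
    have := (((h.hw1 r).const_mul (a+b)).add (((hasDerivAt_id r).mul (h.hw2 hr)).const_mul b)).neg
    refine this.congr_deriv ?_
    simp only [id]; ring
  have hθL : ∀ (a b : ℝ) r, 0 < r → 
      r * (-((a + b) * w2 r + b * (w2 r + r * (n * w1 r / r ^ 2 - n * w2 r / r - V r * w1 r))))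
        + n * (-((a + b) * w1 r + b * (r * w2 r))) + r * (V r * (-(a * w r + b * (r * w1 r))))
        = r * (-(a * (V r * w r - g r)) + 2 * b * g r) := by
    intro a b r hr
    have ode := h.odew r hr
    have e : w2 r = -(n * w1 r / r) - g r := by field_simp; linarith
    rw [e]
    field_simp
    ring
  -- step 2
  have hρb : ρ < rb := by
    by_contra hc
    push Not at hc
    refine h.tail_contra hρ hzρ hz1ρ (K := 1 * C) (fun r hr => h.comb hr zero_le_one zero_le_one le_rfl
      (X := 0) (by have := h.hC; simp; positivity) (h.dw1 r hr)) (θ1 := fun r => -((0 + 1) * w1 r + 1 * (r * w2 r))) (fun r hr => ?_)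
      (fun r hr => ?_) (fun r hr => hθ1d 0 1 r hr) (φ := fun r => -(0 * (V r * w r - g r)) + 2 * 1 * g r)
      (fun r hr => ?_) (fun r hr => ?_) (fun r hr => ?_)
    · have := h.comb hr zero_le_one zero_le_one le_rfl (h.dw1 r hr) (h.dw2 r hr)
      rw [zero_add]; exact this
    · have := hθd 0 1 r
      simpa using this
    · have := hθL 0 1 r hr
      simpa using this
    · have := h.w1neg r (hρ.trans_le hr)
      have : 0 ≤ r := hρ.le.trans hr
      nlinarith
    · have := h.gneg r (hc.trans_lt hr)
      linarith
  have hgρ := h.gpos ρ hρ hρb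
  have hwρ := h.wpos ρ hρ.le
  -- step 3
  have hDρ : 0 < V ρ * w ρ - g ρ := by
    by_contra hc
    push Not at hc
    have hanti : AntitoneOn (fun r => r ^ n * (z r * w1 r - z1 r * w r)) (Set.Icc 0 ρ) := by
      have hd : ∀ r, 0 < r → HasDerivAt (fun r => r ^ n * (z r * w1 r - z1 r * w r)) (r ^ n * (z r * (V r * w r - g r))) r := by
        intro r hr
        refine h.hasDerivB hr (h.hw r) (h.hw1 r) ?_
        have := h.odew r hr
        linarith
      apply antitoneOn_of_deriv_nonpos (convex_Icc 0 ρ) (h.contB hwc hw1c).continuousOn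
      · intro r hr
        rw [interior_Icc] at hr
        exact (hd r hr.1).differentiableAt.differentiableWithinAt
      · intro r hr
        rw [interior_Icc] at hr
        rw [(hd r hr.1).deriv]
        apply mul_nonpos_of_nonneg_of_nonpos (pow_nonneg hr.1.le n)
        apply mul_nonpos_of_nonneg_of_nonpos (hpos r hr.1.le hr.2).le
        have hk := h.hK ρ r hr.1 hr.2 hρb
        have hgr := h.gpos r hr.1 (hr.2.trans hρb)
        by_contra hc2
        push Not at hc2
        have a1 := mul_pos hc2 hgρ
        have a2 := mul_nonpos_of_nonpos_of_nonneg hc hgr.le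
        linarith
    have h1 := hanti ⟨le_rfl, hρ.le⟩ ⟨hρ.le, le_rfl⟩ hρ.le
    simp only [zero_pow hn0, zero_mul, hzρ] at h1
    have : 0 < ρ ^ n * (-z1 ρ * w ρ) := mul_pos hρn (mul_pos (by linarith) hwρ)
    linarith
  -- step 4
  set κ := (V ρ * w ρ - g ρ) / g ρ with hκ
  have hκpos : 0 < κ := div_pos hDρ hgρ
  have hκe : V ρ * w ρ - g ρ = κ * g ρ := by rw [hκ]; field_simp
  -- θ = 2w + κ r w1
  set φ := fun r => -(2 * (V r * w r - g r)) + 2 * κ * g r with hφ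
  have hφ1 : ∀ r, 0 < r → r < ρ → 0 < φ r := by
    intro r hr hr2
    have hk := h.hK ρ r hr hr2 hρb
    rw [hκe] at hk
    have : (V r * w r - g r) < κ * g r := by
      by_contra hc
      push Not at hc
      nlinarith [mul_le_mul_of_nonneg_right hc hgρ.le]
    simp only [hφ]; linarith
  have hφ2 : ∀ r, ρ < r → φ r < 0 := by
    intro r hr2
    simp only [hφ]
    rcases lt_trichotomy r rb with hr | hr | hr
    · have hk := h.hK r ρ hρ hr2 hr
      rw [hκe] at hk
      have : κ * g r < (V r * w r - g r) := by
        by_contra hc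
        push Not at hc
        nlinarith [mul_le_mul_of_nonneg_right hc hgρ.le]
      linarith
    · have hd := h.hD r hr.ge
      have hg0 : g r = 0 := by rw [hr]; exact h.grb
      rw [hg0] at hd ⊢
      linarith
    · have := h.hD r hr.le
      have := h.gneg r hr
      nlinarith
  have hθc : Continuous (fun r => -(2 * w r + κ * (r * w1 r))) := by fun_prop
  have hw2c := h.hw2c
  have hθ1c : Continuous (fun r => -((2 + κ) * w1 r + κ * (r * w2 r))) := by fun_prop
  have hθρ : 0 ≤ -(2 * w ρ + κ * (ρ * w1 ρ)) := by
    have hd : ∀ r, 0 < r → HasDerivAt (fun r => r ^ n * (z r * (-((2 + κ) * w1 r + κ * (r * w2 r))) - z1 r * (-(2 * w r + κ * (r * w1 r)))))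
        (r ^ n * (z r * φ r)) r := by
      intro r hr
      refine h.hasDerivB hr (θ1 := fun r => (-((2 + κ) * w1 r + κ * (r * w2 r)))) (hθd 2 κ r) (hθ1d 2 κ r hr) ?_
      exact hθL 2 κ r hr
    have hmono : MonotoneOn (fun r => r ^ n * (z r * (-((2 + κ) * w1 r + κ * (r * w2 r))) - z1 r * (-(2 * w r + κ * (r * w1 r))))) (Set.Icc 0 ρ) := by
      apply monotoneOn_of_deriv_nonneg (convex_Icc 0 ρ) (h.contB hθc hθ1c).continuousOn
      · intro r hr
        rw [interior_Icc] at hr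
        exact (hd r hr.1).differentiableAt.differentiableWithinAt
      · intro r hr
        rw [interior_Icc] at hr
        rw [(hd r hr.1).deriv]
        exact mul_nonneg (pow_nonneg hr.1.le n) (mul_nonneg (hpos r hr.1.le hr.2).le (hφ1 r hr.1 hr.2).le)
    have h1 := hmono ⟨le_rfl, hρ.le⟩ ⟨hρ.le, le_rfl⟩ hρ.le
    simp only [zero_pow hn0, zero_mul, hzρ] at h1
    by_contra hc
    push Not at hc
    have : 0 < ρ ^ n * (z1 ρ * (-(2 * w ρ + κ * (ρ * w1 ρ)))) := mul_pos hρn (mul_pos_of_neg_of_neg hz1ρ hc)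
    linarith
  -- step 5
  have hDall : ∀ r, ρ ≤ r → 0 < V r * w r - g r := by
    intro r hr
    rcases hr.eq_or_lt with e | hlt
    · rw [← e]; exact hDρ
    rcases lt_or_ge r rb with h2 | h2
    · have := hφ2 r hlt
      have hg := h.gpos r (hρ.trans hlt) h2
      simp only [hφ] at this
      nlinarith [mul_pos hκpos hg]
    · exact h.hD r h2
  have hWG : ∀ r, ρ ≤ r → 0 ≤ w r * g r - 2 * G r := by
    have hd : ∀ r, HasDerivAt (fun r => w r * g r - 2 * G r) (w1 r * (V r * w r - g r)) r := by
      intro r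
      refine (((h.hw r).mul (h.hg r)).sub ((h.hG r).const_mul 2)).congr_deriv ?_
      ring
    have hanti : AntitoneOn (fun r => w r * g r - 2 * G r) (Set.Ici ρ) := by
      apply antitoneOn_of_deriv_nonpos (convex_Ici ρ)
      · exact fun x _ => (hd x).continuousAt.continuousWithinAt
      · exact fun x _ => (hd x).differentiableAt.differentiableWithinAt
      · intro r hr
        have hr : ρ < r := by simpa using hr
        rw [(hd r).deriv]
        exact mul_nonpos_of_nonpos_of_nonneg (h.w1neg r (hρ.trans hr)).le (hDall r hr.le).le
    have ht : Tendsto (fun r => w r * g r - 2 * G r) atTop (𝓝 0) := by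
      refine h.tend 0 (K := C ^ 2 + 2 * C) fun r hr => ?_
      have hC := h.hC
      have e1 := exp_pos (-δ * r)
      have e2 : exp (-δ * r) ≤ 1 := by
        rw [exp_le_one_iff]; nlinarith [h.hδ]
      have b0 := h.dw r hr
      have b1 := h.dg r hr
      have b2 := h.dG r hr
      have q : |w r * g r| ≤ C ^ 2 * exp (-δ * r) := by
        rw [abs_mul]
        calc |w r| * |g r| ≤ (C * exp (-δ * r)) * (C * exp (-δ * r)) := by gcongr
          _ ≤ (C * exp (-δ * r)) * (C * 1) := by gcongr
          _ = _ := by ring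
      refine (abs_sub _ _).trans ?_
      rw [abs_mul 2, abs_of_pos (by norm_num : (0:ℝ) < 2), pow_zero, one_mul]
      linarith
    intro r hr
    refine le_of_tendsto ht ?_
    filter_upwards [eventually_ge_atTop r] with x hx
    exact hanti (Set.mem_Ici.2 hr) (Set.mem_Ici.2 (hr.trans hx)) hx
  have hratio : AntitoneOn (fun r => 2 + κ * (r * w1 r / w r)) (Set.Ici ρ) := by
    have hd : ∀ r, 0 < r → HasDerivAt (fun r => 2 + κ * (r * w1 r / w r)) (κ * (((w1 r + r * w2 r) * w r - r * w1 r * w1 r) / w r ^ 2)) r := by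
      intro r hr
      have := ((((hasDerivAt_id r).mul (h.hw1 r)).div (h.hw r) (h.wpos r hr.le).ne').const_mul κ).const_add 2
      refine this.congr_deriv ?_
      simp only [id, Pi.mul_apply]; ring
    apply antitoneOn_of_deriv_nonpos (convex_Ici ρ)
    · exact fun x hx => (hd x (hρ.trans_le hx)).continuousAt.continuousWithinAt
    · intro x hx
      have hx : ρ < x := by simpa using hx
      exact (hd x (hρ.trans hx)).differentiableAt.differentiableWithinAt
    · intro r hr
      have hr : ρ < r := by simpa using hr
      have hr0 := hρ.trans hr
      rw [(hd r hr0).deriv]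
      apply mul_nonpos_of_nonneg_of_nonpos hκpos.le
      apply div_nonpos_of_nonpos_of_nonneg _ (sq_nonneg _)
      have hP := h.P_nonneg hn hr0
      have hW := mul_nonneg (pow_nonneg hr0.le (n+1)) (hWG r hr.le)
      have ode := h.odew r hr0
      have e : r * w2 r = -(n * w1 r) - r * g r := by linarith
      have hrn := pow_pos hr0 n
      have key : r ^ n * ((w1 r + r * w2 r) * w r - r * w1 r * w1 r) ≤ 0 := by
        rw [e]
        rw [pow_succ] at hP hW
        linarith
      by_contra hc
      push Not at hc
      nlinarith [mul_pos hrn hc]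
  have hθall : ∀ r, ρ ≤ r → 0 ≤ -(2 * w r + κ * (r * w1 r)) := by
    intro r hr
    have h1 := hratio (Set.mem_Ici.2 le_rfl) (Set.mem_Ici.2 hr) hr
    simp only at h1
    have hwr := h.wpos r (hρ.le.trans hr)
    have e : ∀ s, 0 < w s → (2 + κ * (s * w1 s / w s)) * w s = 2 * w s + κ * (s * w1 s) := by
      intro s hs; field_simp
    have h2 : 2 + κ * (ρ * w1 ρ / w ρ) ≤ 0 := by
      by_contra hc
      push Not at hc
      have := mul_pos hc hwρ
      rw [e ρ hwρ] at this
      linarith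
    have h3 := mul_nonneg (neg_nonneg.2 (h1.trans h2)) hwr.le
    rw [neg_mul, e r hwr] at h3
    exact h3
  refine h.tail_contra hρ hzρ hz1ρ (K := (2 + κ) * C) (θ1 := fun r => -((2 + κ) * w1 r + κ * (r * w2 r)))
    (fun r hr => ?_) (fun r hr => ?_) (fun r hr => hθd 2 κ r) (fun r hr => hθ1d 2 κ r hr)
    (fun r hr => hθL 2 κ r hr) hθall hφ2
  · have hC := h.hC
    have e := exp_pos (-δ * r)
    have b0 := h.dw r hr
    have b1 := h.dw1 r hr
    rw [abs_neg]
    have h1 : |2 * w r + κ * (r * w1 r)| ≤ 2 * |w r| + κ * (r * |w1 r|) := by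
      refine (abs_add_le _ _).trans ?_
      simp [abs_mul, abs_of_nonneg hκpos.le, abs_of_nonneg hr]
    have h2 : 0 ≤ (C * exp (-δ * r)) := by positivity
    calc _ ≤ _ := h1
      _ ≤ (2 + κ) * (C * exp (-δ * r)) + (2 + κ) * (r * (C * exp (-δ * r))) := by
        gcongr <;> linarith
      _ = _ := by ring
  · exact h.comb hr (by positivity) hκpos.le (by linarith) (h.dw1 r hr) (h.dw2 r hr)

theorem zero (h : RD n w w1 w2 z z1 z2 g V G C δ M rb) : ∀ r, 0 ≤ r → z r = 0 := by
  apply h.uniq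
  by_contra hne
  rcases Nat.eq_zero_or_pos n with hn | hn
  · subst hn
    have hw1c : Continuous w1 := continuous_iff_continuousAt.2 fun r => (h.hw1 r).continuousAt
    set B1 := fun r => r ^ 0 * (z r * w2 r - z1 r * w1 r) with hB1
    have hB1d : ∀ r, 0 < r → HasDerivAt B1 0 r := by
      intro r hr
      have := h.hasDerivB (φ := 0) hr (h.hw1 r) (h.hw2 hr) (by simp)
      exact this.congr_deriv (by simp)
    have hB1c : Continuous B1 := h.contB hw1c h.hw2c
    have hcst : ∀ r, 0 < r → B1 r = B1 0 := by
      intro r hr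
      obtain ⟨c, hc, he⟩ := exists_hasDerivAt_eq_slope B1 (fun _ => 0) hr hB1c.continuousOn (fun x hx => hB1d x hx.1)
      rcases div_eq_zero_iff.1 he.symm with h5 | h5 <;> linarith
    have hB0 : B1 0 ≠ 0 := by
      simp only [hB1, pow_zero, one_mul, h.z10, zero_mul, sub_zero]
      exact mul_ne_zero hne h.w20
    refine h.noint (θ := w1) (θ1 := w2) (K := C) (fun r => h.bw1) (fun r => h.bw2) (a := 0) le_rfl
      (abs_pos.2 hB0) fun r hr => ?_
    exact (congrArg _ (hcst r hr).symm).le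
  · rcases lt_or_gt_of_ne hne with h0 | h0
    · have h' : RD n w w1 w2 (fun r => - z r) (fun r => - z1 r) (fun r => - z2 r) g V G C δ M rb :=
        { h with
          hz := fun r => (h.hz r).neg
          hz1 := fun r => (h.hz1 r).neg
          odez := fun r hr => by have := h.odez r hr; linarith
          z10 := by simp [h.z10]
          zint := by have := h.zint; simpa using this }
      exact h'.main_pos hn (by simpa using h0)
    · exact h.main_pos hn h0
end RD
end
end

section
open MeasureTheory Real Filter Topology
noncomputable section

abbrev EE (N : ℕ) := EuclideanSpace ℝ (Fin N)
/-- smooth -/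
abbrev Sm {N : ℕ} (f : EE N → ℝ) : Prop := ContDiff ℝ (⊤ : ℕ∞) f

/-- directional derivative -/
def dd {N : ℕ} (e : EE N) (f : EE N → ℝ) (x : EE N) : ℝ := fderiv ℝ f x e

variable {N : ℕ}

lemma pd_eq (i : Fin N) (f : EE N → ℝ) : pd i f = dd (EuclideanSpace.single i 1) f := rfl

lemma Sm.diff {f : EE N → ℝ} (h : Sm f) (x : EE N) : DifferentiableAt ℝ f x :=
  h.contDiffAt.differentiableAt (by simp)

lemma Sm.dd {f : EE N → ℝ} (h : Sm f) (e : EE N) : Sm (dd e f) := by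
  have : ContDiff ℝ (⊤ : ℕ∞) (fderiv ℝ f) := h.fderiv_right (by simp)
  exact this.clm_apply contDiff_const

lemma dd_mul {f g : EE N → ℝ} (hf : Sm f) (hg : Sm g) (e x) :
    dd e (fun y => f y * g y) x = f x * dd e g x + g x * dd e f x := by
  unfold dd
  rw [fderiv_fun_mul (hf.diff x) (hg.diff x)]
  simp

lemma dd_add {f g : EE N → ℝ} (hf : Sm f) (hg : Sm g) (e x) :
    dd e (fun y => f y + g y) x = dd e f x + dd e g x := by
  unfold dd
  rw [fderiv_fun_add (hf.diff x) (hg.diff x)]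
  simp

lemma dd_sub {f g : EE N → ℝ} (hf : Sm f) (hg : Sm g) (e x) :
    dd e (fun y => f y - g y) x = dd e f x - dd e g x := by
  unfold dd
  rw [fderiv_fun_sub (hf.diff x) (hg.diff x)]
  simp

lemma dd_const_mul {f : EE N → ℝ} (hf : Sm f) (c : ℝ) (e x) :
    dd e (fun y => c * f y) x = c * dd e f x := by
  unfold dd
  rw [fderiv_const_mul (hf.diff x)]
  simp

lemma dd_sum {ι : Type*} (s : Finset ι) {f : ι → EE N → ℝ} (hf : ∀ i, Sm (f i)) (e x) :
    dd e (fun y => ∑ i ∈ s, f i y) x = ∑ i ∈ s, dd e (f i) x := by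
  unfold dd
  rw [fderiv_fun_sum (fun i _ => (hf i).diff x)]
  simp

lemma dd_comp {f : EE N → ℝ} (hf : Sm f) {φ : ℝ → ℝ} {φ' : ℝ} (e x) (h : HasDerivAt φ φ' (f x)) :
    dd e (fun y => φ (f y)) x = φ' * dd e f x := by
  unfold dd
  have := (h.comp_hasFDerivAt x (hf.diff x).hasFDerivAt).fderiv
  change fderiv ℝ (φ ∘ f) x e = _
  rw [this]; simp

lemma dd_comm {f : EE N → ℝ} (hf : Sm f) (e e' x) : dd e (dd e' f) x = dd e' (dd e f) x := by
  have hs : IsSymmSndFDerivAt ℝ f x := by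
    apply ContDiffAt.isSymmSndFDerivAt hf.contDiffAt
    simp only [minSmoothness_of_isRCLikeNormedField]
    exact WithTop.coe_le_coe.2 (le_top : (2:ℕ∞) ≤ ⊤)
  have h1 : DifferentiableAt ℝ (fderiv ℝ f) x := by
    have : ContDiff ℝ (⊤ : ℕ∞) (fderiv ℝ f) := hf.fderiv_right (by simp)
    exact this.contDiffAt.differentiableAt (by simp)
  have key : ∀ a b : EE N, dd a (dd b f) x = fderiv ℝ (fderiv ℝ f) x a b := by
    intro a b
    change fderiv ℝ (fun y => fderiv ℝ f y b) x a = _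
    rw [fderiv_clm_apply h1 (differentiableAt_const b)]
    simp
  rw [key, key]; exact hs e e'

lemma lap_eq (f : EE N → ℝ) (x) : lap f x = ∑ i, dd (EuclideanSpace.single i 1) (dd (EuclideanSpace.single i 1) f) x := rfl

lemma lap_mul {f g : EE N → ℝ} (hf : Sm f) (hg : Sm g) (x) :
    lap (fun y => f y * g y) x = f x * lap g x + 2 * ∑ i, pd i f x * pd i g x + g x * lap f x := by
  simp only [lap_eq, pd_eq, Finset.mul_sum]
  rw [← Finset.sum_add_distrib, ← Finset.sum_add_distrib]
  refine Finset.sum_congr rfl fun i _ => ?_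
  set e := EuclideanSpace.single i (1:ℝ)
  rw [show dd e (fun y => f y * g y) = fun y => f y * dd e g y + g y * dd e f y from funext fun y => dd_mul hf hg e y]
  rw [dd_add (hf.mul (hg.dd e)) (hg.mul (hf.dd e)), dd_mul hf (hg.dd e), dd_mul hg (hf.dd e)]
  ring

lemma lap_comp {f : EE N → ℝ} (hf : Sm f) {φ φ1 φ2 : ℝ → ℝ} (h1 : ∀ x, HasDerivAt φ (φ1 x) x)
    (h2 : ∀ x, HasDerivAt φ1 (φ2 x) x) (hφ1 : ContDiff ℝ (⊤ : ℕ∞) φ1) (x) :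
    lap (fun y => φ (f y)) x = φ2 (f x) * gradsq f x + φ1 (f x) * lap f x := by
  simp only [lap_eq, gradsq, pd_eq, Finset.mul_sum]
  rw [← Finset.sum_add_distrib]
  refine Finset.sum_congr rfl fun i _ => ?_
  set e := EuclideanSpace.single i (1:ℝ)
  rw [show dd e (fun y => φ (f y)) = fun y => φ1 (f y) * dd e f y from funext fun y => dd_comp hf e y (h1 _)]
  rw [dd_mul (f := fun y => φ1 (f y)) (hφ1.comp hf) (hf.dd e), dd_comp hf e x (h2 _)]
  ring

lemma lap_add {f g : EE N → ℝ} (hf : Sm f) (hg : Sm g) (x) : lap (fun y => f y + g y) x = lap f x + lap g x := by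
  simp only [lap_eq]
  rw [← Finset.sum_add_distrib]
  refine Finset.sum_congr rfl fun i _ => ?_
  rw [show dd (EuclideanSpace.single i (1:ℝ)) (fun y => f y + g y) = fun y => _ from funext fun y => dd_add hf hg _ y]
  exact dd_add (hf.dd _) (hg.dd _) _ _

lemma lap_sub {f g : EE N → ℝ} (hf : Sm f) (hg : Sm g) (x) : lap (fun y => f y - g y) x = lap f x - lap g x := by
  simp only [lap_eq]
  rw [← Finset.sum_sub_distrib]
  refine Finset.sum_congr rfl fun i _ => ?_
  rw [show dd (EuclideanSpace.single i (1:ℝ)) (fun y => f y - g y) = fun y => _ from funext fun y => dd_sub hf hg _ y]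
  exact dd_sub (hf.dd _) (hg.dd _) _ _

lemma lap_const_mul {f : EE N → ℝ} (hf : Sm f) (c : ℝ) (x) : lap (fun y => c * f y) x = c * lap f x := by
  simp only [lap_eq, Finset.mul_sum]
  refine Finset.sum_congr rfl fun i _ => ?_
  rw [show dd (EuclideanSpace.single i (1:ℝ)) (fun y => c * f y) = fun y => _ from funext fun y => dd_const_mul hf c _ y]
  exact dd_const_mul (hf.dd _) c _ _

lemma lap_sum {ι : Type*} (s : Finset ι) {f : ι → EE N → ℝ} (hf : ∀ i, Sm (f i)) (x) :
    lap (fun y => ∑ i ∈ s, f i y) x = ∑ i ∈ s, lap (f i) x := by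
  simp only [lap_eq]
  rw [Finset.sum_comm]
  refine Finset.sum_congr rfl fun i _ => ?_
  rw [show dd (EuclideanSpace.single i (1:ℝ)) (fun y => ∑ i ∈ s, f i y) = fun y => _ from funext fun y => dd_sum s hf _ y]
  exact dd_sum s (fun j => (hf j).dd _) _ _

lemma dd_lap {f : EE N → ℝ} (hf : Sm f) (e x) : dd e (lap f) x = lap (dd e f) x := by
  rw [show lap f = fun x => ∑ i, dd (EuclideanSpace.single i 1) (dd (EuclideanSpace.single i 1) f) x from rfl]
  rw [dd_sum _ (fun i => (hf.dd _).dd _), lap_eq]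
  refine Finset.sum_congr rfl fun i _ => ?_
  rw [dd_comm (hf.dd _)]
  congr 1
  exact funext fun y => dd_comm hf _ _ _

lemma lap_w {ω p : ℝ} {u : EE N → ℝ} (hu : IsGroundState N ω p u) (x) :
    lap (fun y => qH (u y)) x = - qf ω p (u x) := by
  have hs := hu.solves x
  have hS2 : ∀ t, HasDerivAt (fun t : ℝ => 2 * t) 2 t := fun t => by
    simpa using (hasDerivAt_id t).const_mul (2:ℝ)
  rw [lap_comp hu.smooth (φ := fun t => t ^ 2) (φ1 := fun t => 2 * t) (φ2 := fun _ => 2)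
    (fun t => by simpa using hasDerivAt_pow 2 t) hS2 (by fun_prop)] at hs
  rw [lap_comp hu.smooth (φ1 := qS) (φ2 := fun t => 2 * t / qS t) qH_hasDeriv qS_hasDeriv qS_contDiff]
  have h1 := qS_sq (u x)
  have h2 := (qS_pos (u x)).ne'
  unfold qf
  field_simp
  rw [h1]
  linarith

lemma qS'_hasDeriv (t : ℝ) : HasDerivAt (fun t => 2 * t / qS t) (2 / qS t ^ 3) t := by
  have := ((hasDerivAt_id t).const_mul (2:ℝ)).div (qS_hasDeriv t) (qS_pos t).ne'
  refine this.congr_deriv ?_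
  have h1 := qS_sq t
  have h2 := (qS_pos t).ne'
  simp only [id]
  field_simp
  rw [h1]; ring

lemma lap_Z {ω p : ℝ} {u v : EE N → ℝ} (hu : IsGroundState N ω p u) (hv : Sm v)
    (heq : ∀ x, Lplus ω p u v x = 0) (x) :
    lap (fun y => qS (u y) * v y) x = - (qV ω p (u x) * (qS (u x) * v x)) := by
  have hs := hu.solves x
  have hL := heq x
  have hS2 : ∀ t, HasDerivAt (fun t : ℝ => 2 * t) 2 t := fun t => by
    simpa using (hasDerivAt_id t).const_mul (2:ℝ)
  have hlu := lap_comp hu.smooth (φ := fun t => t ^ 2) (φ1 := fun t => 2 * t) (φ2 := fun _ => 2)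
    (fun t => by simpa using hasDerivAt_pow 2 t) hS2 (by fun_prop) x
  rw [hlu] at hs
  unfold Lplus at hL
  rw [hlu, lap_mul hu.smooth hv] at hL
  have hqs : Sm (fun y => qS (u y)) := qS_contDiff.comp hu.smooth
  have hq2 : ContDiff ℝ (⊤:ℕ∞) (fun t => 2 * t / qS t) :=
    (contDiff_const.mul contDiff_id).div qS_contDiff (fun t => (qS_pos t).ne')
  rw [lap_mul hqs hv, lap_comp hu.smooth qS_hasDeriv qS'_hasDeriv hq2]
  have e : ∑ i, pd i (fun y => qS (u y)) x * pd i v x = 2 * u x / qS (u x) * ∑ i, pd i u x * pd i v x := by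
    rw [Finset.mul_sum]
    refine Finset.sum_congr rfl fun i _ => ?_
    rw [pd_eq, dd_comp hu.smooth _ x (qS_hasDeriv _), ← pd_eq]; ring
  rw [e]
  have h1 := qS_sq (u x)
  have h2 := qS_pos (u x)
  set P := ∑ i, pd i u x * pd i v x
  unfold qV
  have key : u x ^ p = ω * u x - lap u x * qS (u x) ^ 2 - 2 * u x * gradsq u x := by rw [h1]; linarith
  have key2 : lap v x * qS (u x) ^ 2 = (ω - p * u x ^ (p-1)) * v x - 4 * u x * P - 4 * u x * lap u x * v x - 2 * gradsq u x * v x := by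
    rw [h1]; linarith
  rw [key]
  set s := qS (u x)
  have key3 : lap v x = ((ω - p * u x ^ (p-1)) * v x - 4 * u x * P - 4 * u x * lap u x * v x - 2 * gradsq u x * v x) / s ^ 2 := by
    field_simp; linarith
  rw [key3]
  field_simp
  have h3 : u x ^ 2 = (s ^ 2 - 1) / 2 := by linarith
  ring_nf
  rw [h3]
  ring
end
end

section
open MeasureTheory Real Filter Topology
noncomputable section
variable {N : ℕ}

lemma dd_dd_eq {f : EE N → ℝ} (hf : Sm f) (a b x) : dd a (dd b f) x = fderiv ℝ (fderiv ℝ f) x a b := by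
  have h1 : DifferentiableAt ℝ (fderiv ℝ f) x := by
    have : ContDiff ℝ (⊤ : ℕ∞) (fderiv ℝ f) := hf.fderiv_right (by simp)
    exact this.contDiffAt.differentiableAt (by simp)
  change fderiv ℝ (fun y => fderiv ℝ f y b) x a = _
  rw [fderiv_clm_apply h1 (differentiableAt_const b)]
  simp

lemma lap_onb {f : EE N → ℝ} (hf : Sm f) (b : OrthonormalBasis (Fin N) ℝ (EE N)) (x) :
    lap f x = ∑ i, dd (b i) (dd (b i) f) x := by
  have h : ∀ b : OrthonormalBasis (Fin N) ℝ (EE N),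
      ∑ i, dd (b i) (dd (b i) f) x = Laplacian.laplacian f x := by
    intro b
    rw [InnerProductSpace.laplacian_eq_iteratedFDeriv_orthonormalBasis f b]
    refine Finset.sum_congr rfl fun i _ => ?_
    rw [iteratedFDeriv_two_apply, dd_dd_eq hf]; rfl
  rw [h b, ← h (EuclideanSpace.basisFun (Fin N) ℝ), lap_eq]
  simp

lemma Sm.comp_iso {f : EE N → ℝ} (hf : Sm f) (R : EE N ≃ₗᵢ[ℝ] EE N) : Sm (fun x => f (R x)) :=
  hf.comp R.toContinuousLinearEquiv.contDiff

lemma dd_iso {f : EE N → ℝ} (hf : Sm f) (R : EE N ≃ₗᵢ[ℝ] EE N) (e x) :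
    dd e (fun x => f (R x)) x = dd (R e) f (R x) := by
  unfold dd
  have h1 : HasFDerivAt (fun x => R x) (R.toContinuousLinearEquiv : EE N →L[ℝ] EE N) x :=
    R.toContinuousLinearEquiv.hasFDerivAt
  have := ((hf.diff (R x)).hasFDerivAt.comp x h1).fderiv
  change fderiv ℝ (f ∘ fun x => R x) x e = _
  rw [this]; rfl

lemma lap_iso {f : EE N → ℝ} (hf : Sm f) (R : EE N ≃ₗᵢ[ℝ] EE N) (x) :
    lap (fun x => f (R x)) x = lap f (R x) := by
  rw [lap_eq, lap_onb hf ((EuclideanSpace.basisFun (Fin N) ℝ).map R)]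
  refine Finset.sum_congr rfl fun i _ => ?_
  rw [show dd (EuclideanSpace.single i (1:ℝ)) (fun x => f (R x)) = fun x => dd (R (EuclideanSpace.single i (1:ℝ))) f (R x)
    from funext fun y => dd_iso hf R _ y, dd_iso (hf.dd _)]
  simp

lemma hasDerivAt_ray {f : EE N → ℝ} (hf : Sm f) (y e : EE N) (t : ℝ) :
    HasDerivAt (fun t : ℝ => f (y + t • e)) (dd e f (y + t • e)) t := by
  have h1 : HasDerivAt (fun t : ℝ => y + t • e) e t := by
    have := ((hasDerivAt_id t).smul_const e).const_add y
    refine this.congr_deriv ?_; simp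
  exact (hf.diff _).hasFDerivAt.comp_hasDerivAt t h1

lemma hasDerivAt_ray0 {f : EE N → ℝ} (hf : Sm f) (e : EE N) (t : ℝ) :
    HasDerivAt (fun t : ℝ => f (t • e)) (dd e f (t • e)) t := by
  have := hasDerivAt_ray hf 0 e t
  simpa using this

/-- radial functions -/
def Rad (f : EE N → ℝ) : Prop := ∀ x y, ‖x‖ = ‖y‖ → f x = f y

lemma Rad.dd_perp {f : EE N → ℝ} (h : Rad f) (hf : Sm f) {y b : EE N} (hb : inner ℝ y b = 0) : dd b f y = 0 := by
  have h1 := hasDerivAt_ray hf y b 0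
  have h2 := hasDerivAt_ray hf y (-b) 0
  have e : (fun t : ℝ => f (y + t • (-b))) = fun t : ℝ => f (y + t • b) := by
    funext t
    apply h
    have : ‖y + t • (-b)‖ ^ 2 = ‖y + t • b‖ ^ 2 := by
      rw [norm_add_sq_real, norm_add_sq_real]
      simp [inner_smul_right, hb]
    exact (sq_eq_sq₀ (norm_nonneg _) (norm_nonneg _)).1 this
  rw [e] at h2
  have h3 := h1.unique h2
  simp only [zero_smul, add_zero] at h3
  have : dd (-b) f y = - dd b f y := by simp [dd]
  linarith

lemma Rad.dd_rel {f : EE N → ℝ} (h : Rad f) (hf : Sm f) (y a b : EE N) :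
    inner ℝ y a * dd b f y = inner ℝ y b * dd a f y := by
  have := h.dd_perp hf (y := y) (b := (inner ℝ y a : ℝ) • b - (inner ℝ y b : ℝ) • a) (by
    simp [inner_sub_right, inner_smul_right]; ring)
  simp [dd] at this ⊢
  linarith

lemma Sm.inner_left (a : EE N) : Sm (fun y : EE N => inner ℝ y a) := by
  have : ContDiff ℝ (⊤:ℕ∞) (fun y : EE N => inner ℝ y a) := contDiff_id.inner ℝ contDiff_const
  exact this

lemma dd_inner (a e x : EE N) : dd e (fun y => inner ℝ y a) x = inner ℝ e a := by
  have h := hasDerivAt_ray (Sm.inner_left a) x e 0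
  have h2 : HasDerivAt (fun t : ℝ => inner ℝ (x + t • e) a) (inner ℝ e a) 0 := by
    have : (fun t : ℝ => (inner ℝ (x + t • e) a : ℝ)) = fun t => inner ℝ x a + t * inner ℝ e a := by
      funext t; simp [inner_add_left, inner_smul_left]
    rw [this]
    simpa using ((hasDerivAt_id (0:ℝ)).mul_const (inner ℝ e a : ℝ)).const_add (inner ℝ x a : ℝ)
  have h3 := h.unique h2
  simpa using h3

lemma Rad.dd_dd {f : EE N → ℝ} (h : Rad f) (hf : Sm f) {x e : EE N} (he : ‖e‖ = 1) (hx : inner ℝ x e = 0) :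
    ‖x‖ ^ 2 * dd e (dd e f) x = dd x f x := by
  have h1 : dd e (fun y => inner ℝ y x * dd e f y) x = dd e (fun y => inner ℝ y e * dd x f y) x := by
    congr 1; funext y; exact h.dd_rel hf y x e
  rw [dd_mul (Sm.inner_left x) (hf.dd e), dd_mul (Sm.inner_left e) (hf.dd x), dd_inner, dd_inner,
    real_inner_self_eq_norm_sq, real_inner_comm, hx, real_inner_self_eq_norm_sq, he, ] at h1
  linarith

lemma Rad.ray {f : EE N → ℝ} (h : Rad f) (hf : Sm f) {e e' : EE N} (he : ‖e‖ = 1) (he' : ‖e'‖ = 1) (t : ℝ) :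
    dd e f (t • e) = dd e' f (t • e') ∧ dd e (dd e f) (t • e) = dd e' (dd e' f) (t • e') := by
  have h0 : (fun t : ℝ => f (t • e)) = fun t : ℝ => f (t • e') := by
    funext t; apply h; simp [norm_smul, he, he']
  have h1 : (fun t : ℝ => dd e f (t • e)) = fun t : ℝ => dd e' f (t • e') := by
    funext t
    have a := hasDerivAt_ray0 hf e t
    rw [h0] at a
    exact a.unique (hasDerivAt_ray0 hf e' t)
  refine ⟨congrFun h1 t, ?_⟩
  have a := hasDerivAt_ray0 (hf.dd e) e t
  rw [h1] at a
  exact a.unique (hasDerivAt_ray0 (hf.dd e') e' t)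

lemma Rad.lap_ray {n : ℕ} {f : EE (n+1) → ℝ} (h : Rad f) (hf : Sm f) {t : ℝ} (ht : 0 < t) :
    t * dd (EuclideanSpace.single 0 1) (dd (EuclideanSpace.single 0 1) f) (t • EuclideanSpace.single 0 1)
      + n * dd (EuclideanSpace.single 0 1) f (t • EuclideanSpace.single 0 1) = t * lap f (t • EuclideanSpace.single 0 1) := by
  rw [lap_eq, Fin.sum_univ_succ, mul_add]
  congr 1
  set e0 : EE (n+1) := EuclideanSpace.single 0 1
  have he0 : ‖e0‖ = 1 := by simp [e0]
  have : ∀ i : Fin n, dd (EuclideanSpace.single i.succ 1) (dd (EuclideanSpace.single i.succ 1) f) (t • e0) = dd e0 f (t • e0) / t := by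
    intro i
    have := h.dd_dd hf (x := t • e0) (e := EuclideanSpace.single i.succ 1) (by simp) (by
      rw [inner_smul_left, EuclideanSpace.inner_single_left]
      simp [(Fin.succ_ne_zero i).symm])
    have e2 : dd (t • e0) f (t • e0) = t * dd e0 f (t • e0) := by simp [dd]
    rw [norm_smul, he0, e2, mul_one, Real.norm_eq_abs, sq_abs] at this
    field_simp
    have h5 : t * (t * dd (EuclideanSpace.single i.succ 1) (dd (EuclideanSpace.single i.succ 1) f) (t • e0)) = t * dd e0 f (t • e0) := by linarith
    have := mul_left_cancel₀ ht.ne' h5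
    linarith
  rw [Finset.sum_congr rfl (fun i _ => this i)]
  simp
  field_simp

lemma Rad.lap_zero {f : EE N → ℝ} (h : Rad f) (hf : Sm f) {e : EE N} (he : ‖e‖ = 1) :
    lap f 0 = N * dd e (dd e f) 0 := by
  rw [lap_eq]
  rw [Finset.sum_congr rfl (fun i _ => show _ = dd e (dd e f) 0 by
    have := (h.ray hf (e := EuclideanSpace.single i 1) (e' := e) (by simp) he 0).2
    simpa using this)]
  simp

lemma Rad.dd_zero {f : EE N → ℝ} (h : Rad f) (hf : Sm f) (e : EE N) : dd e f 0 = 0 :=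
  h.dd_perp hf (by simp)
end
end

section
open MeasureTheory Real Filter Topology
noncomputable section
variable {N : ℕ}

/-- the transformed profile -/
def ww (u : EE N → ℝ) : EE N → ℝ := fun y => qH (u y)

lemma IsGroundState.rad {ω p : ℝ} {u : EE N → ℝ} (hu : IsGroundState N ω p u) : Rad u := by
  obtain ⟨U, -, -, h⟩ := hu.radial
  intro x y hxy
  rw [h, h, hxy]

lemma IsGroundState.anti {ω p : ℝ} {u : EE N → ℝ} (hu : IsGroundState N ω p u) {x y : EE N} (h : ‖x‖ < ‖y‖) :
    u y < u x := by
  obtain ⟨U, h1, -, h2⟩ := hu.radial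
  rw [h2, h2]
  exact h1 (Set.mem_Ici.2 (norm_nonneg x)) (Set.mem_Ici.2 (norm_nonneg y)) h

lemma IsGroundState.le_zero {ω p : ℝ} {u : EE N → ℝ} (hu : IsGroundState N ω p u) (x : EE N) : u x ≤ u 0 := by
  rcases eq_or_ne x 0 with rfl | hx
  · exact le_rfl
  · exact (hu.anti (by simpa using hx)).le

lemma ww_smooth {ω p : ℝ} {u : EE N → ℝ} (hu : IsGroundState N ω p u) : Sm (ww u) :=
  qH_contDiff.comp hu.smooth

lemma ww_rad {ω p : ℝ} {u : EE N → ℝ} (hu : IsGroundState N ω p u) : Rad (ww u) := by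
  intro x y h; unfold ww; rw [hu.rad x y h]

lemma dd_ww {ω p : ℝ} {u : EE N → ℝ} (hu : IsGroundState N ω p u) (e x) : dd e (ww u) x = qS (u x) * dd e u x :=
  dd_comp hu.smooth e x (qH_hasDeriv _)

lemma dd_dd_ww {ω p : ℝ} {u : EE N → ℝ} (hu : IsGroundState N ω p u) (e x) :
    dd e (dd e (ww u)) x = qS (u x) * dd e (dd e u) x + dd e u x * (2 * u x / qS (u x) * dd e u x) := by
  have hqs : Sm (fun y => qS (u y)) := qS_contDiff.comp hu.smooth
  rw [show dd e (ww u) = fun x => qS (u x) * dd e u x from funext fun x => dd_ww hu e x]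
  rw [dd_mul hqs (Sm.dd hu.smooth e), dd_comp hu.smooth e x (qS_hasDeriv _)]

lemma IsGroundState.decays {ω p : ℝ} {u : EE N → ℝ} (hu : IsGroundState N ω p u) :
    ∃ C > 0, ∃ δ > 0, ∀ x, |u x| ≤ C * exp (-δ * ‖x‖) ∧ (∀ e, |dd e u x| ≤ C * ‖e‖ * exp (-δ * ‖x‖)) ∧
      ∀ e e', |dd e (dd e' u) x| ≤ C * ‖e‖ * ‖e'‖ * exp (-δ * ‖x‖) := by
  obtain ⟨C0, hC0, d0, hd0, h0⟩ := hu.decay 0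
  obtain ⟨C1, hC1, d1, hd1, h1⟩ := hu.decay 1
  obtain ⟨C2, hC2, d2, hd2, h2⟩ := hu.decay 2
  set C := C0 + C1 + C2
  set δ := min d0 (min d1 d2)
  have hδ : 0 < δ := lt_min hd0 (lt_min hd1 hd2)
  have key : ∀ (c d : ℝ) (x : EE N), 0 < c → c ≤ C → δ ≤ d → c * exp (-d * ‖x‖) ≤ C * exp (-δ * ‖x‖) := by
    intro c d x hc h1 h2
    have : exp (-d * ‖x‖) ≤ exp (-δ * ‖x‖) := by
      apply exp_le_exp.2
      nlinarith [norm_nonneg x]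
    gcongr
  refine ⟨C, by positivity, δ, hδ, fun x => ⟨?_, fun e => ?_, fun e e' => ?_⟩⟩
  · have := (h0 x).trans (key C0 d0 x hC0 (by simp only [C]; linarith) (min_le_left _ _))
    rwa [norm_iteratedFDeriv_zero] at this
  · have := (h1 x).trans (key C1 d1 x hC1 (by simp only [C]; linarith) ((min_le_right _ _).trans (min_le_left _ _)))
    rw [norm_iteratedFDeriv_one] at this
    have h5 := (fderiv ℝ u x).le_opNorm e
    calc |dd e u x| ≤ ‖fderiv ℝ u x‖ * ‖e‖ := h5
      _ ≤ C * exp (-δ * ‖x‖) * ‖e‖ := by gcongr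
      _ = _ := by ring
  · have := (h2 x).trans (key C2 d2 x hC2 (by simp only [C]; linarith) ((min_le_right _ _).trans (min_le_right _ _)))
    have h5 := (iteratedFDeriv ℝ 2 u x).le_opNorm ![e, e']
    rw [iteratedFDeriv_two_apply] at h5
    simp only [Fin.prod_univ_two, Matrix.cons_val_zero, Matrix.cons_val_one] at h5
    rw [dd_dd_eq hu.smooth]
    calc |fderiv ℝ (fderiv ℝ u) x e e'| ≤ _ := h5
      _ ≤ C * exp (-δ * ‖x‖) * (‖e‖ * ‖e'‖) := by gcongr
      _ = _ := by ring

section prof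
variable {n : ℕ} {ω p : ℝ} {u : EE (n+1) → ℝ}

/-- base vector -/
def e0 (n : ℕ) : EE (n+1) := EuclideanSpace.single 0 1
lemma e0_norm : ‖e0 n‖ = 1 := by simp [e0]
lemma norm_ray (t : ℝ) : ‖t • e0 n‖ = |t| := by rw [norm_smul, e0_norm, mul_one, Real.norm_eq_abs]

lemma ode_w (hu : IsGroundState (n+1) ω p u) {t : ℝ} (ht : 0 < t) :
    t * dd (e0 n) (dd (e0 n) (ww u)) (t • e0 n) + n * dd (e0 n) (ww u) (t • e0 n) + t * qf ω p (u (t • e0 n)) = 0 := by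
  have := (ww_rad hu).lap_ray (ww_smooth hu) ht
  rw [show lap (ww u) (t • EuclideanSpace.single 0 1) = - qf ω p (u (t • EuclideanSpace.single 0 1)) from lap_w hu _] at this
  unfold e0
  linarith

/-- flux -/
lemma flux_deriv (hu : IsGroundState (n+1) ω p u) {t : ℝ} (ht : 0 < t) :
    HasDerivAt (fun t => t ^ n * dd (e0 n) (ww u) (t • e0 n)) (- (t ^ n * qf ω p (u (t • e0 n)))) t := by
  have h1 := hasDerivAt_ray0 ((ww_smooth hu).dd (e0 n)) (e0 n) t
  refine ((hasDerivAt_pow n t).mul h1).congr_deriv ?_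
  have ode := ode_w hu ht
  have hpow : (n:ℝ) * t ^ (n-1) * t = n * t ^ n := by
    cases n with
    | zero => simp
    | succ k => simp [pow_succ]; ring
  apply mul_left_cancel₀ ht.ne'
  set X := dd (e0 n) (ww u) (t • e0 n)
  set Y := dd (e0 n) (dd (e0 n) (ww u)) (t • e0 n)
  calc _ = (n * t ^ (n-1) * t) * X + t ^ n * (t * Y) := by ring
    _ = t ^ n * (t * Y + n * X) := by rw [hpow]; ring
    _ = _ := by rw [show t * Y + n * X = - (t * qf ω p (u (t • e0 n))) by linarith]; ring

lemma flux_cont (hu : IsGroundState (n+1) ω p u) : Continuous (fun t : ℝ => t ^ n * dd (e0 n) (ww u) (t • e0 n)) := by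
  have : Continuous (dd (e0 n) (ww u)) := ((ww_smooth hu).dd (e0 n)).continuous
  fun_prop

lemma flux_zero (hu : IsGroundState (n+1) ω p u) : (0:ℝ) ^ n * dd (e0 n) (ww u) ((0:ℝ) • e0 n) = 0 := by
  rw [zero_smul, (ww_rad hu).dd_zero (ww_smooth hu)]; simp

lemma w1_nonpos (hu : IsGroundState (n+1) ω p u) {t : ℝ} (ht : 0 < t) : dd (e0 n) (ww u) (t • e0 n) ≤ 0 := by
  have h1 := hasDerivAt_ray0 (ww_smooth hu) (e0 n) t
  have h2 : Tendsto _ (𝓝[>] t) _ := (hasDerivAt_iff_tendsto_slope.1 h1).mono_left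
      (nhdsWithin_mono t (fun x (hx : t < x) => (ne_of_gt hx : x ≠ t)))
  refine le_of_tendsto h2 ?_
  filter_upwards [self_mem_nhdsWithin] with s hs
  have hs : t < s := hs
  rw [slope_def_field]
  apply div_nonpos_of_nonpos_of_nonneg _ (by linarith)
  have : u (s • e0 n) < u (t • e0 n) := hu.anti (by
    rw [norm_ray, norm_ray, abs_of_pos ht, abs_of_pos (ht.trans hs)]; exact hs)
  have := qH_strictMono this
  unfold ww
  linarith

lemma ray_anti (hu : IsGroundState (n+1) ω p u) {s t : ℝ} (hs : 0 ≤ s) (ht : s < t) : u (t • e0 n) < u (s • e0 n) :=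
  hu.anti (by rw [norm_ray, norm_ray, abs_of_nonneg hs, abs_of_pos (hs.trans_lt ht)]; exact ht)

lemma qf_pos_iff (hp : 1 < p) {t : ℝ} (ht : 0 < t) : 0 < qf ω p t ↔ ω < t ^ (p-1) := by
  rw [qf_eq ht]
  have := qS_pos t
  constructor
  · intro h
    by_contra hc
    push Not at hc
    have h2 : (t ^ (p-1) - ω) * t ≤ 0 := mul_nonpos_of_nonpos_of_nonneg (by linarith) ht.le
    have := div_nonpos_of_nonpos_of_nonneg h2 this.le
    linarith
  · intro h
    have : 0 < t ^ (p-1) - ω := by linarith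
    positivity

lemma qf_neg_iff {t : ℝ} (ht : 0 < t) (h : t ^ (p-1) < ω) : qf ω p t < 0 := by
  rw [qf_eq ht]
  apply div_neg_of_neg_of_pos _ (qS_pos t)
  exact mul_neg_of_neg_of_pos (by linarith) ht

lemma u0_gt (hu : IsGroundState (n+1) ω p u) (hp : 1 < p) : ω < u 0 ^ (p-1) := by
  by_contra hc
  push Not at hc
  have hmono : StrictMonoOn (fun t : ℝ => t ^ n * dd (e0 n) (ww u) (t • e0 n)) (Set.Ici 0) := by
    apply strictMonoOn_of_deriv_pos (convex_Ici 0) (flux_cont hu).continuousOn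
    intro t ht
    have ht : 0 < t := by simpa using ht
    rw [(flux_deriv hu ht).deriv, neg_pos]
    apply mul_neg_of_pos_of_neg (pow_pos ht n)
    apply qf_neg_iff (hu.pos _)
    refine lt_of_lt_of_le ?_ hc
    apply Real.rpow_lt_rpow (hu.pos _).le _ (by linarith)
    have := ray_anti hu le_rfl ht
    rwa [zero_smul] at this
  have h1 := hmono (Set.mem_Ici.2 le_rfl) (Set.mem_Ici.2 zero_le_one) one_pos
  simp only [flux_zero hu, one_pow, one_mul] at h1
  have := w1_nonpos hu one_pos
  linarith

lemma w20_neg {u' : EE N → ℝ} (hu : IsGroundState N ω p u') (hN : 0 < N) (hp : 1 < p) (h0 : ω < u' 0 ^ (p-1)) {e : EE N} (he : ‖e‖ = 1) :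
    dd e (dd e (ww u')) 0 < 0 := by
  have := (ww_rad hu).lap_zero (ww_smooth hu) he
  rw [show lap (ww u') 0 = - qf ω p (u' 0) from lap_w hu _] at this
  have h2 := (qf_pos_iff (ω := ω) hp (hu.pos 0)).2 h0
  have hN' : (0:ℝ) < N := by exact_mod_cast hN
  by_contra hc
  push Not at hc
  have := mul_nonneg hN'.le hc
  linarith

lemma exists_rb (hu : IsGroundState (n+1) ω p u) (hp : 1 < p) (hω : 0 < ω) : ∃ rb : ℝ, 0 < rb ∧ u (rb • e0 n) ^ (p-1) = ω := by
  obtain ⟨C, hC, δ, hδ, hdec⟩ := hu.decays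
  have hc : Continuous (fun t : ℝ => u (t • e0 n) ^ (p-1)) := by
    have : Continuous u := hu.smooth.continuous
    apply Continuous.rpow_const (by fun_prop)
    intro x; right; linarith
  have ht : Tendsto (fun t : ℝ => u (t • e0 n)) atTop (𝓝 0) := by
    have : Tendsto (fun r => C * exp (-δ * r)) atTop (𝓝 0) := by
      have : Tendsto (fun r => exp (-δ * r)) atTop (𝓝 0) := by
        apply Real.tendsto_exp_atBot.comp
        exact tendsto_id.const_mul_atTop_of_neg (by linarith)
      simpa using this.const_mul C
    refine squeeze_zero_norm' ?_ this
    filter_upwards [eventually_ge_atTop 0] with r hr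
    have := (hdec (r • e0 n)).1
    rwa [norm_ray, abs_of_nonneg hr] at this
  have ht2 : Tendsto (fun t : ℝ => u (t • e0 n) ^ (p-1)) atTop (𝓝 0) := by
    have := ht.rpow_const (p := p - 1) (Or.inr (by linarith))
    rwa [Real.zero_rpow (by linarith)] at this
  obtain ⟨b, hb, hb2⟩ := ((ht2.eventually (gt_mem_nhds hω)).and (eventually_gt_atTop 0)).exists
  have h0 := u0_gt hu hp
  have hiv := intermediate_value_Icc' hb2.le hc.continuousOn
  have : ω ∈ Set.Icc (u (b • e0 n) ^ (p-1)) (u ((0:ℝ) • e0 n) ^ (p-1)) := ⟨hb.le, by rw [zero_smul]; exact h0.le⟩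
  obtain ⟨rb, hrb, he⟩ := hiv this
  refine ⟨rb, lt_of_le_of_ne hrb.1 ?_, he⟩
  rintro rfl
  simp only [zero_smul] at he
  linarith

lemma w1_neg (hu : IsGroundState (n+1) ω p u) (hp : 1 < p) (hω : 0 < ω) {t : ℝ} (ht : 0 < t) : dd (e0 n) (ww u) (t • e0 n) < 0 := by
  obtain ⟨rb, hrb, he⟩ := exists_rb hu hp hω
  rcases le_or_gt t rb with h | h
  · have hanti : StrictAntiOn (fun t : ℝ => t ^ n * dd (e0 n) (ww u) (t • e0 n)) (Set.Icc 0 t) := by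
      apply strictAntiOn_of_deriv_neg (convex_Icc 0 t) (flux_cont hu).continuousOn
      intro s hs
      rw [interior_Icc] at hs
      rw [(flux_deriv hu hs.1).deriv, neg_lt_zero]
      apply mul_pos (pow_pos hs.1 n)
      rw [qf_pos_iff hp (hu.pos _), ← he]
      apply Real.rpow_lt_rpow (hu.pos _).le _ (by linarith)
      exact ray_anti hu hs.1.le (hs.2.trans_le h)
    have h1 := hanti ⟨le_rfl, ht.le⟩ ⟨ht.le, le_rfl⟩ ht
    simp only [flux_zero hu] at h1
    by_contra hc
    push Not at hc
    have := mul_nonneg (pow_nonneg ht.le n) hc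
    linarith
  · have hmono : StrictMonoOn (fun t : ℝ => t ^ n * dd (e0 n) (ww u) (t • e0 n)) (Set.Ici t) := by
      apply strictMonoOn_of_deriv_pos (convex_Ici t) (flux_cont hu).continuousOn
      intro s hs
      have hs : t < s := by simpa using hs
      have hs0 := ht.trans hs
      rw [(flux_deriv hu hs0).deriv, neg_pos]
      apply mul_neg_of_pos_of_neg (pow_pos hs0 n)
      apply qf_neg_iff (hu.pos _)
      rw [← he]
      apply Real.rpow_lt_rpow (hu.pos _).le _ (by linarith)
      exact ray_anti hu hrb.le (h.trans hs)
    have h1 := hmono (Set.mem_Ici.2 le_rfl) (Set.mem_Ici.2 (by linarith : t ≤ t + 1)) (by linarith)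
    simp only at h1
    by_contra hc
    push Not at hc
    have h2 := mul_nonneg (pow_nonneg ht.le n) hc
    have h3 := w1_nonpos hu (t := t + 1) (by linarith)
    have h4 := mul_nonpos_of_nonneg_of_nonpos (pow_nonneg (by linarith : 0 ≤ t + 1) n) h3
    linarith
end prof
end
end

section
open MeasureTheory Real Filter Topology
noncomputable section
variable {n : ℕ} {ω p : ℝ} {u : EE (n+1) → ℝ}

lemma qV_bound (hω : 0 < ω) (hp : 1 < p) {t T : ℝ} (ht : 0 < t) (hT : t ≤ T) :
    |qV ω p t| ≤ (p * T ^ (p-1) + ω) + (T ^ p + ω * T) * (2 * T) := by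
  have hs := qS_one_le t
  have hT0 : 0 < T := ht.trans_le hT
  have h1 : t ^ (p-1) ≤ T ^ (p-1) := Real.rpow_le_rpow ht.le hT (by linarith)
  have h2 : t ^ p ≤ T ^ p := Real.rpow_le_rpow ht.le hT (by linarith)
  have h3 : 0 < t ^ (p-1) := Real.rpow_pos_of_pos ht _
  have h4 : 0 < t ^ p := Real.rpow_pos_of_pos ht _
  have hdiv : ∀ (X : ℝ) (k : ℕ), |X / qS t ^ k| ≤ |X| := by
    intro X k
    rw [abs_div, abs_of_pos (pow_pos (qS_pos t) k)]
    exact div_le_self (abs_nonneg _) (one_le_pow₀ hs)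
  unfold qV
  refine (abs_sub _ _).trans (add_le_add ((hdiv _ _).trans ?_) ((hdiv _ _).trans ?_))
  · refine (abs_sub _ _).trans ?_
    rw [abs_of_pos hω, abs_of_pos (by positivity)]
    gcongr
  · rw [abs_mul, abs_of_pos (by positivity : 0 < 2 * t)]
    gcongr
    refine (abs_sub _ _).trans ?_
    rw [abs_of_pos h4, abs_of_pos (by positivity)]
    gcongr

lemma qf_bound (hω : 0 < ω) (hp : 1 < p) {t T : ℝ} (ht : 0 < t) (hT : t ≤ T) :
    |qf ω p t| ≤ (T ^ (p-1) + ω) * t := by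
  have hs := qS_one_le t
  have h1 : t ^ (p-1) ≤ T ^ (p-1) := Real.rpow_le_rpow ht.le hT (by linarith)
  have h3 : 0 < t ^ (p-1) := Real.rpow_pos_of_pos ht _
  rw [qf_eq ht, abs_div, abs_of_pos (qS_pos t)]
  refine (div_le_self (abs_nonneg _) hs).trans ?_
  rw [abs_mul, abs_of_pos ht]
  gcongr
  refine (abs_sub _ _).trans ?_
  rw [abs_of_pos hω, abs_of_pos h3]
  gcongr

lemma qG_bound (hω : 0 < ω) (hp : 1 < p) {t T : ℝ} (ht : 0 < t) (hT : t ≤ T) :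
    |qG ω p t| ≤ (T ^ p + ω * T) * t := by
  have hT0 : 0 < T := ht.trans_le hT
  have h2 : t ^ p ≤ T ^ p := Real.rpow_le_rpow ht.le hT (by linarith)
  have h4 : 0 < t ^ p := Real.rpow_pos_of_pos ht _
  unfold qG
  rw [Real.rpow_add_one ht.ne']
  refine (abs_sub _ _).trans ?_
  rw [abs_of_pos (by positivity), abs_of_pos (by positivity)]
  have a1 : t ^ p * t / (p + 1) ≤ t ^ p * t := div_le_self (by positivity) (by linarith)
  have a2 : t ^ p * t ≤ T ^ p * t := by gcongr
  have a3 : ω * t ^ 2 / 2 ≤ ω * T * t := by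
    have : ω * t * t ≤ ω * T * t := by gcongr
    have : 0 < ω * t * t := by positivity
    nlinarith
  nlinarith

lemma qS_mono {t T : ℝ} (ht : 0 ≤ t) (hT : t ≤ T) : qS t ≤ qS T := by
  unfold qS; apply Real.sqrt_le_sqrt; gcongr

lemma ww_decays {N : ℕ} {u' : EE N → ℝ} (hu : IsGroundState N ω p u') : ∃ C > 0, ∃ δ > 0, ∀ x, |u' x| ≤ C * exp (-δ * ‖x‖) ∧
    |ww u' x| ≤ C * exp (-δ * ‖x‖) ∧ (∀ e, |dd e (ww u') x| ≤ C * ‖e‖ * exp (-δ * ‖x‖)) ∧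
    ∀ e, ‖e‖ = 1 → |dd e (dd e (ww u')) x| ≤ C * exp (-δ * ‖x‖) := by
  obtain ⟨C, hC, δ, hδ, h⟩ := hu.decays
  set S := qS (u' 0)
  have hS1 : 1 ≤ S := qS_one_le _
  set T := u' 0
  have hT : 0 < T := hu.pos 0
  set K := (C + C * S + 2 * T * C * C)
  have hK1 : C ≤ K := by
    have : 0 ≤ C * S := by positivity
    have : 0 ≤ 2 * T * C * C := by positivity
    simp only [K]; linarith
  have hK2 : C * S ≤ K := by
    have : 0 ≤ 2 * T * C * C := by positivity
    simp only [K]; linarith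
  refine ⟨K, by positivity, δ, hδ, fun x => ?_⟩
  obtain ⟨h0, h1, h2⟩ := h x
  have hux := hu.pos x
  have hSx : qS (u' x) ≤ S := qS_mono hux.le (hu.le_zero x)
  have hSp := qS_pos (u' x)
  have hE := exp_pos (-δ * ‖x‖)
  have hE1 : exp (-δ * ‖x‖) ≤ 1 := by
    rw [exp_le_one_iff]; nlinarith [norm_nonneg x]
  refine ⟨h0.trans (by gcongr), ?_, fun e => ?_, fun e he => ?_⟩
  · unfold ww
    rw [abs_of_pos (qH_pos hux)]
    have := qH_le hux.le
    have h3 := le_abs_self (u' x)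
    calc _ ≤ u' x * qS (u' x) := this
      _ ≤ (C * exp (-δ * ‖x‖)) * S := by gcongr; exact h3.trans h0
      _ = (C * S) * exp (-δ * ‖x‖) := by ring
      _ ≤ _ := by gcongr
  · rw [dd_ww hu, abs_mul, abs_of_pos hSp]
    calc _ ≤ S * (C * ‖e‖ * exp (-δ * ‖x‖)) := by gcongr; exact h1 e
      _ = (C * S) * ‖e‖ * exp (-δ * ‖x‖) := by ring
      _ ≤ _ := by gcongr
  · rw [dd_dd_ww hu]
    have a := h1 e
    have b := h2 e e
    rw [he] at a b
    simp only [mul_one] at a b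
    refine (abs_add_le _ _).trans ?_
    rw [abs_mul, abs_mul, abs_mul, abs_of_pos hSp, abs_of_pos (by positivity : 0 < 2 * u' x / qS (u' x))]
    have h5 : 2 * u' x / qS (u' x) ≤ 2 * T := by
      refine (div_le_self (by positivity) (qS_one_le _)).trans ?_
      have := hu.le_zero x
      linarith
    calc _ ≤ S * (C * exp (-δ * ‖x‖)) + (C * exp (-δ * ‖x‖)) * (2 * T * (C * 1)) := by
          gcongr
          exact a.trans (by gcongr)
      _ = (C * S + 2 * T * C * C) * exp (-δ * ‖x‖) := by ring
      _ ≤ _ := by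
        gcongr
        simp only [K]; linarith

lemma rad_int {Z : EE (n+1) → ℝ} (hZ : Sm Z) (hr : Rad Z)
    (hint : Integrable (fun x => Z x ^ 2 + ‖fderiv ℝ Z x‖ ^ 2)) :
    IntegrableOn (fun r : ℝ => r ^ n * (Z (r • e0 n) ^ 2 + dd (e0 n) Z (r • e0 n) ^ 2)) (Set.Ioi 0) := by
  set F : ℝ → ℝ := fun r => Z (r • e0 n) ^ 2 + dd (e0 n) Z (r • e0 n) ^ 2
  have hZc : Continuous Z := hZ.continuous
  have hdc : Continuous (dd (e0 n) Z) := (hZ.dd _).continuous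
  have hFc : Continuous F := by fun_prop
  have h1 : Integrable (fun x : EE (n+1) => F ‖x‖) := by
    refine hint.mono' (hFc.comp continuous_norm).aestronglyMeasurable (Eventually.of_forall fun x => ?_)
    have hF0 : 0 ≤ F ‖x‖ := by positivity
    rw [Real.norm_of_nonneg hF0]
    have e1 : Z (‖x‖ • e0 n) = Z x := hr _ _ (by rw [norm_ray, abs_of_nonneg (norm_nonneg x)])
    simp only [F]
    rw [e1]
    refine add_le_add le_rfl ?_
    rcases eq_or_ne x 0 with rfl | hx
    · rw [norm_zero, zero_smul, hr.dd_zero hZ]; simp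
    · have hx0 : 0 < ‖x‖ := norm_pos_iff.2 hx
      set e := ‖x‖⁻¹ • x
      have he : ‖e‖ = 1 := by simp [e, norm_smul, hx0.ne']
      have hxe : x = ‖x‖ • e := by simp [e, smul_smul, hx0.ne']
      have := (hr.ray hZ e0_norm he ‖x‖).1
      rw [this, ← hxe]
      have h5 := (fderiv ℝ Z x).le_opNorm e
      rw [he, mul_one] at h5
      rw [← sq_abs]
      gcongr
      exact h5
  have h2 := (integrable_fun_norm_addHaar (E := EE (n+1)) volume (f := F)).1 h1
  simpa using h2

theorem rad_zero (hu : IsGroundState (n+1) ω p u) (hp : 1 < p) (hω : 0 < ω) {Z : EE (n+1) → ℝ} (hZ : Sm Z) (hr : Rad Z)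
    (hL : ∀ x, lap Z x = - (qV ω p (u x) * Z x))
    (hint : Integrable (fun x => Z x ^ 2 + ‖fderiv ℝ Z x‖ ^ 2)) : ∀ x, Z x = 0 := by
  obtain ⟨C, hC, δ, hδ, hd⟩ := ww_decays hu
  obtain ⟨rb, hrb, hrbe⟩ := exists_rb hu hp hω
  set T := u 0
  have hT : 0 < T := hu.pos 0
  set K := C + (T ^ (p-1) + ω) * C + (T ^ p + ω * T) * C
  have hTp1 : 0 < T ^ (p-1) := Real.rpow_pos_of_pos hT _
  have hTp : 0 < T ^ p := Real.rpow_pos_of_pos hT _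
  have hA : 0 < (T ^ (p-1) + ω) * C := by positivity
  have hB : 0 < (T ^ p + ω * T) * C := by positivity
  have hKC : C ≤ K := by simp only [K]; linarith
  have hKA : (T ^ (p-1) + ω) * C ≤ K := by simp only [K]; linarith
  have hKB : (T ^ p + ω * T) * C ≤ K := by simp only [K]; linarith
  have hpow : ∀ s t : ℝ, 0 ≤ s → s < t → u (t • e0 n) ^ (p-1) < u (s • e0 n) ^ (p-1) := fun s t hs ht =>
    Real.rpow_lt_rpow (hu.pos _).le (ray_anti hu hs ht) (by linarith)
  have hray : ∀ r : ℝ, 0 ≤ r → ‖r • e0 n‖ = r := fun r hr => by rw [norm_ray, abs_of_nonneg hr]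
  have hRD : RD n (fun r => ww u (r • e0 n)) (fun r => dd (e0 n) (ww u) (r • e0 n))
      (fun r => dd (e0 n) (dd (e0 n) (ww u)) (r • e0 n)) (fun r => Z (r • e0 n)) (fun r => dd (e0 n) Z (r • e0 n))
      (fun r => dd (e0 n) (dd (e0 n) Z) (r • e0 n)) (fun r => qf ω p (u (r • e0 n))) (fun r => qV ω p (u (r • e0 n)))
      (fun r => qG ω p (u (r • e0 n))) K δ ((p * T ^ (p-1) + ω) + (T ^ p + ω * T) * (2 * T)) rb := by
    constructor
    case hw => exact fun r => hasDerivAt_ray0 (ww_smooth hu) _ r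
    case hw1 => exact fun r => hasDerivAt_ray0 ((ww_smooth hu).dd _) _ r
    case hw2c =>
      have : Continuous (dd (e0 n) (dd (e0 n) (ww u))) := (((ww_smooth hu).dd _).dd _).continuous
      fun_prop
    case hz => exact fun r => hasDerivAt_ray0 hZ _ r
    case hz1 => exact fun r => hasDerivAt_ray0 (hZ.dd _) _ r
    case odew => exact fun r hr => ode_w hu hr
    case odez =>
      intro r hr0
      have := hr.lap_ray hZ hr0
      rw [hL] at this
      unfold e0
      linarith
    case hg =>
      intro r
      have h1 := hasDerivAt_ray0 hu.smooth (e0 n) r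
      refine ((qf_hasDeriv ω p (hu.pos (r • e0 n))).comp r h1).congr_deriv ?_
      rw [dd_ww hu]; ring
    case hG =>
      intro r
      have h1 := hasDerivAt_ray0 hu.smooth (e0 n) r
      refine ((qG_hasDeriv ω p hp (hu.pos (r • e0 n))).comp r h1).congr_deriv ?_
      rw [dd_ww hu]; ring
    case z10 => simp only [zero_smul]; exact hr.dd_zero hZ _
    case w10 => simp only [zero_smul]; exact (ww_rad hu).dd_zero (ww_smooth hu) _
    case w20 => simp only [zero_smul]; exact (w20_neg hu (by omega) hp (u0_gt hu hp) e0_norm).ne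
    case wpos => exact fun r _ => qH_pos (hu.pos _)
    case w1neg => exact fun r hr => w1_neg hu hp hω hr
    case hδ => exact hδ
    case hC => positivity
    case dw =>
      intro r hr
      have := (hd (r • e0 n)).2.1
      rw [hray r hr] at this
      exact this.trans (by gcongr)
    case dw1 =>
      intro r hr
      have := (hd (r • e0 n)).2.2.1 (e0 n)
      rw [hray r hr, e0_norm, mul_one] at this
      exact this.trans (by gcongr)
    case dw2 =>
      intro r hr
      have := (hd (r • e0 n)).2.2.2 (e0 n) e0_norm
      rw [hray r hr] at this
      exact this.trans (by gcongr)
    case dG =>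
      intro r hr
      have := (hd (r • e0 n)).1
      rw [hray r hr] at this
      calc _ ≤ _ := qG_bound hω hp (hu.pos (r • e0 n)) (hu.le_zero _)
        _ ≤ (T ^ p + ω * T) * (C * exp (-δ * r)) := by gcongr; exact (le_abs_self _).trans this
        _ = (T ^ p + ω * T) * C * exp (-δ * r) := by ring
        _ ≤ _ := by gcongr
    case dg =>
      intro r hr
      have := (hd (r • e0 n)).1
      rw [hray r hr] at this
      calc _ ≤ _ := qf_bound hω hp (hu.pos (r • e0 n)) (hu.le_zero _)
        _ ≤ (T ^ (p-1) + ω) * (C * exp (-δ * r)) := by gcongr; exact (le_abs_self _).trans this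
        _ = (T ^ (p-1) + ω) * C * exp (-δ * r) := by ring
        _ ≤ _ := by gcongr
    case zint => exact rad_int hZ hr hint
    case Vb => exact fun r _ => qV_bound hω hp (hu.pos _) (hu.le_zero _)
    case hrb => exact hrb
    case gpos =>
      intro r h1 h2
      rw [qf_pos_iff hp (hu.pos _), ← hrbe]
      exact hpow r rb h1.le h2
    case grb =>
      rw [qf_eq (hu.pos _), hrbe]; simp
    case gneg =>
      intro r h1
      apply qf_neg_iff (hu.pos _)
      rw [← hrbe]
      exact hpow rb r hrb.le h1
    case hD =>
      intro r h1
      have := qD_pos (ω := ω) hp (hu.pos (r • e0 n)) (by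
        rcases h1.eq_or_lt with rfl | h2
        · exact hrbe.le
        · rw [← hrbe]; exact (hpow rb r hrb.le h2).le)
      exact this
    case hK =>
      intro r0 r1 h1 h2 h3
      have := qK_anti hω hp (hu.pos (r0 • e0 n)) (by rw [← hrbe]; exact hpow r0 rb (h1.trans h2).le h3)
        (ray_anti hu h1.le h2)
      exact this
    case hPi =>
      intro hn r0 r1 h1 h2 h3
      have hle : u (r0 • e0 n) ≤ u (r1 • e0 n) := by
        rcases h2.eq_or_lt with rfl | h2
        · exact le_rfl
        · exact (ray_anti hu h1.le h2).le
      have hn' : (1:ℝ) ≤ n := by exact_mod_cast hn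
      have := qPi_up (M := (n:ℝ) + 1) (by linarith) hω hp (hu.pos (r0 • e0 n)) hle (by
        unfold qPi
        rw [show (n:ℝ) + 1 - 2 = n - 1 by ring]
        exact h3)
      unfold qPi at this
      rw [show (n:ℝ) + 1 - 2 = n - 1 by ring] at this
      exact this
  intro x
  have := hRD.zero ‖x‖ (norm_nonneg x)
  rw [← this]
  exact hr _ _ (by rw [norm_ray, abs_of_nonneg (norm_nonneg x)])
end
end

section
open MeasureTheory Real Filter Topology
noncomputable section
variable {N : ℕ}

lemma par_smooth (k : ℕ) : ∀ g : EE N → ℝ → ℝ, ContDiff ℝ (⊤:ℕ∞) (Function.uncurry g) →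
    ContDiff ℝ k (fun x => ∫ t in (0:ℝ)..1, g x t) := by
  induction k with
  | zero =>
    intro g hg
    rw [Nat.cast_zero, contDiff_zero]
    exact intervalIntegral.continuous_parametric_intervalIntegral_of_continuous' hg.continuous 0 1
  | succ k ih =>
    intro g hg
    set G' : EE N → ℝ → (EE N →L[ℝ] ℝ) := fun x t =>
      (fderiv ℝ (Function.uncurry g) (x, t)).comp (ContinuousLinearMap.inl ℝ (EE N) ℝ)
    have hDs : ContDiff ℝ (⊤:ℕ∞) (fderiv ℝ (Function.uncurry g)) := hg.fderiv_right (by simp)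
    have hG' : Continuous (Function.uncurry G') := by
      have := hDs.continuous
      change Continuous (fun q : EE N × ℝ => (fderiv ℝ (Function.uncurry g) (q.1, q.2)).comp (ContinuousLinearMap.inl ℝ (EE N) ℝ))
      fun_prop
    have hd : ∀ x t, HasFDerivAt (fun x => g x t) (G' x t) x := by
      intro x t
      have h1 : HasFDerivAt (Function.uncurry g) (fderiv ℝ (Function.uncurry g) (x, t)) (x, t) :=
        (hg.contDiffAt.differentiableAt (by simp)).hasFDerivAt
      have h2 : HasFDerivAt (fun y : EE N => (y, t)) (ContinuousLinearMap.inl ℝ (EE N) ℝ) x := hasFDerivAt_prodMk_left x t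
      exact HasFDerivAt.comp (g := Function.uncurry g) x h1 h2
    have hcont : ∀ x, Continuous (g x) := fun x => by
      have := hg.continuous
      exact this.comp (by fun_prop : Continuous fun t : ℝ => (x, t))
    have hcont' : ∀ x, Continuous (G' x) := fun x => hG'.comp (by fun_prop : Continuous fun t : ℝ => (x, t))
    have key : ∀ x₀, HasFDerivAt (fun x => ∫ t in (0:ℝ)..1, g x t) (∫ t in (0:ℝ)..1, G' x₀ t) x₀ := by
      intro x₀
      obtain ⟨M, hM⟩ := ((isCompact_closedBall x₀ 1).prod (isCompact_Icc (a := (0:ℝ)) (b := 1))).exists_bound_of_continuousOn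
        hG'.continuousOn
      refine intervalIntegral.hasFDerivAt_integral_of_dominated_of_fderiv_le (s := Metric.closedBall x₀ 1)
        (bound := fun _ => M) (Metric.closedBall_mem_nhds _ one_pos) ?_ ?_ ?_ ?_ ?_ ?_
      · exact Eventually.of_forall fun x => (hcont x).aestronglyMeasurable
      · exact (hcont x₀).intervalIntegrable _ _
      · exact (hcont' x₀).aestronglyMeasurable
      · refine Eventually.of_forall fun t ht x hx => ?_
        rw [Set.uIoc_of_le zero_le_one] at ht
        exact hM (x, t) ⟨hx, ht.1.le, ht.2⟩
      · exact continuous_const.intervalIntegrable _ _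
      · exact Eventually.of_forall fun t ht x hx => hd x t
    have : ((k+1 : ℕ) : WithTop ℕ∞) = (k : WithTop ℕ∞) + 1 := by push_cast; rfl
    rw [this, contDiff_succ_iff_fderiv_apply]
    refine ⟨fun x => (key x).differentiableAt, by simp, fun y => ?_⟩
    have h2 : (fun x => fderiv ℝ (fun x => ∫ t in (0:ℝ)..1, g x t) x y) = fun x => ∫ t in (0:ℝ)..1, G' x t y := by
      funext x
      rw [(key x).fderiv, ContinuousLinearMap.intervalIntegral_apply ((hcont' x).intervalIntegrable _ _)]
    rw [h2]
    apply ih (fun x t => G' x t y)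
    exact hDs.clm_apply contDiff_const

lemma hadamard {f : EE N → ℝ} (hf : Sm f) {e : EE N} (he : ‖e‖ = 1)
    (h0 : ∀ x, inner ℝ x e = 0 → f x = 0) : ∃ a, Sm a ∧ ∀ x, f x = inner ℝ x e * a x := by
  refine ⟨fun x => ∫ t in (0:ℝ)..1, dd e f (x - ((1 - t) * inner ℝ x e) • e), ?_, fun x => ?_⟩
  · refine contDiff_infty.2 fun k => par_smooth k _ ?_
    have h1 : Sm (dd e f) := hf.dd e
    have h3 : ContDiff ℝ (⊤:ℕ∞) (fun q : EE N × ℝ => inner ℝ q.1 e) := (Sm.inner_left e).comp contDiff_fst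
    have h2 : ContDiff ℝ (⊤:ℕ∞) (fun q : EE N × ℝ => q.1 - ((1 - q.2) * inner ℝ q.1 e) • e) :=
      contDiff_fst.sub (((contDiff_const.sub contDiff_snd).mul h3).smul contDiff_const)
    exact h1.comp h2
  · set s : ℝ := inner ℝ x e
    set y := x - s • e
    have hd := fun t => hasDerivAt_ray hf y (s • e) t
    have hlin : ∀ z, dd (s • e) f z = s * dd e f z := fun z => by simp [dd]
    have hc : Continuous (fun t : ℝ => dd (s • e) f (y + t • s • e)) := by
      have : Continuous (dd (s • e) f) := (hf.dd _).continuous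
      fun_prop
    have := intervalIntegral.integral_eq_sub_of_hasDerivAt (a := 0) (b := 1) (fun t _ => hd t) (hc.intervalIntegrable _ _)
    have hy : f y = 0 := h0 _ (by
      simp only [y, inner_sub_left, inner_smul_left, real_inner_self_eq_norm_sq, he]; simp [s])
    simp only [zero_smul, add_zero, one_smul, hy, sub_zero] at this
    rw [show y + s • e = x by simp [y]] at this
    rw [← this, ← intervalIntegral.integral_const_mul]
    refine intervalIntegral.integral_congr fun t _ => ?_
    rw [hlin]
    congr 2
    simp only [y]
    module
end
end

section
open MeasureTheory Real Filter Topology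
noncomputable section
variable {N : ℕ}

lemma exists_cut (N : ℕ) : ∃ K : ℝ, 0 ≤ K ∧ ∀ R : ℝ, 0 < R → ∃ χ : EE N → ℝ, Sm χ ∧ HasCompactSupport χ ∧
    (∀ x, 0 ≤ χ x) ∧ (∀ x, χ x ≤ 1) ∧ (∀ x, ‖x‖ ≤ R → χ x = 1) ∧
    ∀ x i, (dd (EuclideanSpace.single i 1) χ x) ^ 2 ≤ K / R ^ 2 := by
  let b : ContDiffBump (0 : EE N) := ⟨1, 2, one_pos, one_lt_two⟩
  have hb : Sm b := b.contDiff
  have hbc : HasCompactSupport (b : EE N → ℝ) := b.hasCompactSupport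
  have hdc : HasCompactSupport (fderiv ℝ b) := hbc.fderiv ℝ
  have hdcont : Continuous (fderiv ℝ b) := hb.continuous_fderiv (by simp)
  obtain ⟨M, hM⟩ := hdcont.bounded_above_of_compact_support hdc
  refine ⟨M ^ 2, sq_nonneg _, fun R hR => ⟨fun x => b (R⁻¹ • x), ?_, ?_, fun x => b.nonneg, fun x => b.le_one, ?_, ?_⟩⟩
  · exact hb.comp (contDiff_const_smul _)
  · exact hbc.comp_homeomorph (Homeomorph.smulOfNeZero R⁻¹ (inv_ne_zero hR.ne'))
  · intro x hx
    apply b.one_of_mem_closedBall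
    rw [mem_closedBall_zero_iff, norm_smul, Real.norm_of_nonneg (by positivity)]
    change R⁻¹ * ‖x‖ ≤ 1
    rw [inv_mul_le_iff₀ hR]; linarith
  · intro x i
    have h1 : HasFDerivAt (fun x : EE N => R⁻¹ • x) (R⁻¹ • ContinuousLinearMap.id ℝ (EE N)) x :=
      (hasFDerivAt_id x).const_smul R⁻¹
    have h2 := ((hb.diff (R⁻¹ • x)).hasFDerivAt.comp x h1).fderiv
    have h3 : dd (EuclideanSpace.single i 1) (fun x => b (R⁻¹ • x)) x = R⁻¹ * fderiv ℝ b (R⁻¹ • x) (EuclideanSpace.single i 1) := by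
      unfold dd
      change fderiv ℝ (b ∘ fun x => R⁻¹ • x) x _ = _
      rw [h2]; simp
    rw [h3, mul_pow, inv_pow, mul_comm, ← div_eq_mul_inv]
    have h4 := (fderiv ℝ b (R⁻¹ • x)).le_opNorm (EuclideanSpace.single i 1)
    have h5 := hM (R⁻¹ • x)
    simp only [PiLp.norm_single, norm_one, mul_one] at h4
    have h6 := h4.trans h5
    refine div_le_div_of_nonneg_right ?_ (by positivity)
    rw [← sq_abs]
    exact pow_le_pow_left₀ (abs_nonneg _) h6 2

lemma ibp {f g : EE N → ℝ} (hf : Sm f) (hg : Sm g) (hc : HasCompactSupport g) (e : EE N) :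
    ∫ x, f x * dd e g x = - ∫ x, dd e f x * g x := by
  have hgd : HasCompactSupport (dd e g) := hc.fderiv_apply ℝ e
  have c1 := hf.continuous
  have c2 := hg.continuous
  have c3 : Continuous (dd e f) := (hf.dd e).continuous
  have c4 : Continuous (dd e g) := (hg.dd e).continuous
  exact integral_mul_fderiv_eq_neg_fderiv_mul_of_integrable (μ := volume)
    ((c3.mul c2).integrable_of_hasCompactSupport hc.mul_left)
    ((c1.mul c4).integrable_of_hasCompactSupport hgd.mul_left)
    ((c1.mul c2).integrable_of_hasCompactSupport hc.mul_left)
    (fun x _ => hf.diff x) (fun x _ => hg.diff x)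

lemma liou {ψ Q V : EE N → ℝ} (hψ : Sm ψ) (hQ : Sm Q) (h1 : ∀ x, lap ψ x = - (V x * ψ x))
    (h2 : ∀ x, lap (fun y => ψ y * Q y) x = - (V x * (ψ x * Q x)))
    (hint : Integrable (fun x => (ψ x * Q x) ^ 2)) : ∀ x i, ψ x * dd (EuclideanSpace.single i 1) Q x = 0 := by
  set E : Fin N → EE N := fun i => EuclideanSpace.single i 1
  have hdiv : ∀ x, ∑ i, dd (E i) (fun y => ψ y * (ψ y * dd (E i) Q y)) x = 0 := by
    intro x
    have := h2 x
    rw [lap_mul hψ hQ, h1] at this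
    have e1 : ∀ i, dd (E i) (fun y => ψ y * (ψ y * dd (E i) Q y)) x =
        ψ x * (ψ x * dd (E i) (dd (E i) Q) x + 2 * (pd i ψ x * pd i Q x)) := by
      intro i
      rw [dd_mul hψ (g := fun y => ψ y * dd (E i) Q y) (hψ.mul (hQ.dd _)), dd_mul hψ (hQ.dd _)]
      rw [pd_eq, pd_eq]; simp only [E]; ring
    rw [Finset.sum_congr rfl (fun i _ => e1 i), ← Finset.mul_sum, Finset.sum_add_distrib, ← Finset.mul_sum]
    change ψ x * (ψ x * lap Q x + _) = 0
    rw [← Finset.mul_sum]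
    have h3 : ψ x * lap Q x + 2 * ∑ i, pd i ψ x * pd i Q x = 0 := by linarith
    rw [h3, mul_zero]
  set g : EE N → ℝ := fun x => ∑ i, (ψ x * dd (E i) Q x) ^ 2
  have cψ := hψ.continuous
  have cQ := hQ.continuous
  have cdQ : ∀ i, Continuous (dd (E i) Q) := fun i => (hQ.dd _).continuous
  have cg : Continuous g := by fun_prop
  have g0 : ∀ x, 0 ≤ g x := fun x => Finset.sum_nonneg fun i _ => sq_nonneg _
  obtain ⟨K, hK, hcut⟩ := exists_cut N
  set J := ∫ x, (ψ x * Q x) ^ 2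
  have key : ∀ R : ℝ, 0 < R → ∀ χ : EE N → ℝ, Sm χ → HasCompactSupport χ →
      (∀ x i, (dd (E i) χ x) ^ 2 ≤ K / R ^ 2) → ∫ x, χ x ^ 2 * g x ≤ 4 * (N * (K / R ^ 2)) * J := by
    intro R hR χ hχ hχc hχd
    have cχ := hχ.continuous
    set φ : EE N → ℝ := fun x => χ x * (χ x * Q x)
    have hφ : Sm φ := hχ.mul (hχ.mul hQ)
    have hφc : HasCompactSupport φ := hχc.mul_right
    have hF : ∀ i, Sm (fun y => ψ y * (ψ y * dd (E i) Q y)) := fun i => hψ.mul (hψ.mul (hQ.dd _))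
    have hI1 : ∀ i, Integrable (fun x => (ψ x * (ψ x * dd (E i) Q x)) * dd (E i) φ x) := by
      intro i
      have : Continuous (dd (E i) φ) := (hφ.dd _).continuous
      exact ((hF i).continuous.mul this).integrable_of_hasCompactSupport
        (HasCompactSupport.mul_left (hφc.fderiv_apply ℝ (E i)))
    have hI2 : ∀ i, Integrable (fun x => dd (E i) (fun y => ψ y * (ψ y * dd (E i) Q y)) x * φ x) := by
      intro i
      have : Continuous (dd (E i) (fun y => ψ y * (ψ y * dd (E i) Q y))) := ((hF i).dd _).continuous
      exact (this.mul hφ.continuous).integrable_of_hasCompactSupport hφc.mul_left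
    have hzero : ∫ x, ∑ i, (ψ x * (ψ x * dd (E i) Q x)) * dd (E i) φ x = 0 := by
      rw [integral_finsetSum _ (fun i _ => hI1 i)]
      rw [Finset.sum_congr rfl (fun i _ => ibp (hF i) hφ hφc (E i)), Finset.sum_neg_distrib,
        ← integral_finsetSum _ (fun i _ => hI2 i)]
      simp only [← Finset.sum_mul, hdiv]
      simp
    have hIg : Integrable (fun x => χ x ^ 2 * g x) := by
      have : HasCompactSupport (fun x => χ x ^ 2 * g x) := by
        have h := hχc.mul_right (f' := fun x => χ x * g x)
        have e : (χ * fun x => χ x * g x) = fun x => χ x ^ 2 * g x := by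
          funext x; simp; ring
        rw [← e]; exact h
      exact ((cχ.pow 2).mul cg).integrable_of_hasCompactSupport this
    have hmono : ∫ x, ((1/2) * (χ x ^ 2 * g x) - (2 * (N * (K / R ^ 2))) * (ψ x * Q x) ^ 2) ≤
        ∫ x, ∑ i, (ψ x * (ψ x * dd (E i) Q x)) * dd (E i) φ x := by
      refine integral_mono ((hIg.const_mul _).sub (hint.const_mul _)) (integrable_finsetSum _ fun i _ => hI1 i) fun x => ?_
      simp only
      have hs : ∑ i : Fin N, (K / R ^ 2) = N * (K / R^2) := by simp
      rw [← hs]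
      simp only [g, Finset.mul_sum, Finset.sum_mul, ← Finset.sum_sub_distrib]
      refine Finset.sum_le_sum fun i _ => ?_
      rw [dd_mul hχ (g := fun x => χ x * Q x) (hχ.mul hQ), dd_mul hχ hQ]
      have hd := hχd x i
      have h5 : (ψ x * Q x) ^ 2 * (dd (E i) χ x) ^ 2 ≤ (ψ x * Q x) ^ 2 * (K / R ^ 2) :=
        mul_le_mul_of_nonneg_left hd (sq_nonneg _)
      nlinarith [sq_nonneg (χ x * (ψ x * dd (E i) Q x) + 2 * ((ψ x * Q x) * dd (E i) χ x))]
    rw [hzero, integral_sub (hIg.const_mul _) (hint.const_mul _), integral_const_mul, integral_const_mul] at hmono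
    linarith
  intro x0 i
  obtain ⟨χ, hχ, hχc, hχ0, hχ1, hχR, -⟩ := hcut (‖x0‖ + 1) (by positivity)
  have cχ := hχ.continuous
  have hcs : HasCompactSupport (fun x => χ x ^ 2 * g x) := by
    have h := hχc.mul_right (f' := fun x => χ x * g x)
    have e : (χ * fun x => χ x * g x) = fun x => χ x ^ 2 * g x := by
      funext x; simp; ring
    rw [← e]; exact h
  have hcont : Continuous (fun x => χ x ^ 2 * g x) := (cχ.pow 2).mul cg
  have h6 : g x0 = 0 := by
    by_contra hne
    have hpos := hcont.integral_pos_of_hasCompactSupport_nonneg_nonzero (μ := volume) (x := x0) hcs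
      (fun x => mul_nonneg (sq_nonneg _) (g0 x)) (by simp only [hχR x0 (by linarith)]; simpa using hne)
    set m := ∫ x, χ x ^ 2 * g x
    obtain ⟨R0, hR0⟩ := hχc.isBounded.subset_closedBall 0
    have hJ : 0 ≤ J := integral_nonneg fun x => sq_nonneg _
    set L := 4 * (N * K) * J
    have hL : 0 ≤ L := by positivity
    have hm : ∀ R : ℝ, 0 < R → R0 ≤ R → m * R ^ 2 ≤ L := by
      intro R hR hRR
      obtain ⟨χ', a1, a2, a3, a4, a5, a6⟩ := hcut R hR
      have b1 := key R hR χ' a1 a2 a6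
      have hcs' : HasCompactSupport (fun x => χ' x ^ 2 * g x) := by
        have h := a2.mul_right (f' := fun x => χ' x * g x)
        have e : (χ' * fun x => χ' x * g x) = fun x => χ' x ^ 2 * g x := by
          funext x; simp; ring
        rw [← e]; exact h
      have b2 : m ≤ ∫ x, χ' x ^ 2 * g x := by
        refine integral_mono (hcont.integrable_of_hasCompactSupport hcs)
          (((a1.continuous.pow 2).mul cg).integrable_of_hasCompactSupport hcs') fun x => ?_
        refine mul_le_mul_of_nonneg_right ?_ (g0 x)
        by_cases hx : ‖x‖ ≤ R
        · rw [a5 x hx]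
          exact pow_le_pow_left₀ (hχ0 x) (hχ1 x) 2
        · have : χ x = 0 := by
            by_contra h
            have := hR0 (subset_tsupport _ h)
            rw [mem_closedBall_zero_iff] at this
            exact hx (this.trans hRR)
          rw [this]; nlinarith [sq_nonneg (χ' x)]
      have b3 := b2.trans b1
      have : 4 * (N * (K / R ^ 2)) * J = L / R ^ 2 := by simp only [L]; ring
      rw [this, le_div_iff₀ (by positivity)] at b3
      exact b3
    have hR1 : 1 ≤ |R0| + L / m + 1 := by
      have : 0 ≤ L / m := by positivity
      linarith [abs_nonneg R0]
    have := hm (|R0| + L / m + 1) (by linarith) (by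
      have : 0 ≤ L / m := by positivity
      linarith [le_abs_self R0])
    have h7 : |R0| + L / m + 1 ≤ (|R0| + L / m + 1) ^ 2 := by nlinarith
    have h8 : m * (L / m) = L := by field_simp
    have h9 : m * (|R0| + L / m + 1) ≤ L := (mul_le_mul_of_nonneg_left h7 hpos.le).trans this
    nlinarith [abs_nonneg R0, mul_nonneg hpos.le (abs_nonneg R0)]
  have := (Finset.sum_eq_zero_iff_of_nonneg (fun i _ => sq_nonneg _)).1 h6 i (Finset.mem_univ i)
  exact pow_eq_zero_iff (two_ne_zero) |>.1 this
end
end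

section
open MeasureTheory Real Filter Topology
noncomputable section
variable {n : ℕ} {ω p : ℝ} {u : EE (n+1) → ℝ}

lemma lap_dd_ww (hu : IsGroundState (n+1) ω p u) (e x) :
    lap (dd e (ww u)) x = - (qV ω p (u x) * dd e (ww u) x) := by
  rw [← dd_lap (ww_smooth hu)]
  have h1 : lap (ww u) = fun x => - qf ω p (u x) := funext fun x => lap_w hu x
  rw [h1, dd_ww hu, dd_comp hu.smooth e x (φ := fun t => - qf ω p t) (qf_hasDeriv ω p (hu.pos x)).neg]
  ring

lemma ddx_neg (hu : IsGroundState (n+1) ω p u) (hp : 1 < p) (hω : 0 < ω) {x : EE (n+1)} (hx : x ≠ 0) :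
    dd x (ww u) x < 0 := by
  have hx0 : 0 < ‖x‖ := norm_pos_iff.2 hx
  set e := ‖x‖⁻¹ • x
  have he : ‖e‖ = 1 := by simp [e, norm_smul, hx0.ne']
  have hxe : x = ‖x‖ • e := by simp [e, smul_smul, hx0.ne']
  have h1 := ((ww_rad hu).ray (ww_smooth hu) e0_norm he ‖x‖).1
  have h2 := w1_neg hu hp hω hx0
  rw [h1, ← hxe] at h2
  have h3 : dd x (ww u) x = ‖x‖ * dd e (ww u) x := by
    have : dd (‖x‖ • e) (ww u) x = ‖x‖ * dd e (ww u) x := by simp [dd]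
    rw [← hxe] at this; exact this
  rw [h3]
  exact mul_neg_of_pos_of_neg hx0 h2

theorem odd_part (hu : IsGroundState (n+1) ω p u) (hp : 1 < p) (hω : 0 < ω) {Z : EE (n+1) → ℝ} (hZ : Sm Z)
    (hL : ∀ x, lap Z x = - (qV ω p (u x) * Z x)) (hint : Integrable (fun x => Z x ^ 2)) {e : EE (n+1)} (he : ‖e‖ = 1) (x) :
    Z x - Z ((ℝ ∙ e)ᗮ.reflection x) = (2 * dd e Z 0 / dd e (dd e (ww u)) 0) * dd e (ww u) x := by
  set R := (ℝ ∙ e)ᗮ.reflection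
  have hRe : R e = -e := Submodule.reflection_orthogonalComplement_singleton_eq_neg e
  have hRfix : ∀ x, inner ℝ x e = 0 → R x = x := by
    intro x hx
    apply Submodule.reflection_mem_subspace_eq_self
    rw [Submodule.mem_orthogonal_singleton_iff_inner_left]; exact hx
  set ψ := dd e (ww u)
  have hw := ww_smooth hu
  have hwr := ww_rad hu
  have hψ : Sm ψ := hw.dd e
  set z : EE (n+1) → ℝ := fun y => Z y - Z (R y)
  have hz : Sm z := hZ.sub (hZ.comp_iso R)
  have hur : ∀ x, u (R x) = u x := fun x => hu.rad _ _ (by simp)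
  have hzL : ∀ x, lap z x = - (qV ω p (u x) * z x) := by
    intro x
    rw [lap_sub hZ (hZ.comp_iso R), lap_iso hZ, hL, hL, hur]
    simp only [z]; ring
  obtain ⟨a, ha, hza⟩ := hadamard hz he (fun x hx => by simp only [z]; rw [hRfix x hx]; ring)
  obtain ⟨m, hm, hψm⟩ := hadamard hψ he (fun x hx => hwr.dd_perp hw hx)
  have hee : (inner ℝ e e : ℝ) = 1 := by rw [real_inner_self_eq_norm_sq, he]; norm_num
  have hw20 : dd e ψ 0 < 0 := w20_neg hu (by omega) hp (u0_gt hu hp) he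
  have hψne : ∀ x, inner ℝ x e ≠ 0 → ψ x ≠ 0 := by
    intro x hx h0
    have hx0 : x ≠ 0 := by rintro rfl; simp at hx
    have h1 := hwr.dd_rel hw x x e
    have h2 := ddx_neg hu hp hω hx0
    change _ * ψ x = _ at h1
    rw [h0, mul_zero] at h1
    rcases mul_eq_zero.1 h1.symm with h | h
    · exact hx h
    · exact h2.ne h
  have hm0 : ∀ x, m x ≠ 0 := by
    intro x
    by_cases hx : inner ℝ x e = 0
    · have h1 : dd e ψ x = m x := by
        rw [show ψ = fun y => inner ℝ y e * m y from funext hψm, dd_mul (Sm.inner_left e) hm, dd_inner, hx, hee]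
        ring
      rw [← h1]
      by_cases hx0 : x = 0
      · rw [hx0]; exact hw20.ne
      · have h2 := hwr.dd_dd hw he hx
        have h3 := ddx_neg hu hp hω hx0
        rw [← h2] at h3
        intro h
        change _ * dd e ψ x < 0 at h3
        rw [h] at h3; simp at h3
    · intro h
      exact hψne x hx (by rw [hψm, h, mul_zero])
  set Q : EE (n+1) → ℝ := fun x => a x / m x
  have hQ : Sm Q := ContDiff.div ha hm hm0
  have hzQ : ∀ x, z x = ψ x * Q x := by
    intro x
    rw [hza, hψm]
    simp only [Q]
    have := hm0 x
    field_simp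
  have hzQ' : z = fun x => ψ x * Q x := funext hzQ
  have hzint : Integrable (fun x => z x ^ 2) := by
    have h1 : Integrable (fun x => Z (R x) ^ 2) := by
      have := (R.measurePreserving).integrable_comp_emb R.toHomeomorph.measurableEmbedding (g := fun x => Z x ^ 2)
      exact this.2 hint
    refine ((hint.const_mul 2).add (h1.const_mul 2)).mono' ((hz.continuous.pow 2).aestronglyMeasurable)
      (Eventually.of_forall fun x => ?_)
    rw [Real.norm_of_nonneg (sq_nonneg _)]
    simp only [z, Pi.add_apply]
    nlinarith [sq_nonneg (Z x + Z (R x))]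
  have hli := liou (V := fun x => qV ω p (u x)) hψ hQ (lap_dd_ww hu e)
    (by rw [← hzQ']; intro x; rw [hzL, hzQ]) (by simpa only [hzQ] using hzint)
  have hdQ : ∀ x i, dd (EuclideanSpace.single i 1) Q x = 0 := by
    intro x i
    have hc1 : Continuous (dd (EuclideanSpace.single i 1) Q) := (hQ.dd _).continuous
    have hc : Continuous (fun t : ℝ => dd (EuclideanSpace.single i 1) Q (x + t • e)) := by fun_prop
    have := Continuous.ext_on (dense_compl_singleton (-(inner ℝ x e : ℝ))) hc (continuous_const (y := (0:ℝ))) (by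
      intro t ht
      have h1 : inner ℝ (x + t • e) e ≠ 0 := by
        rw [inner_add_left, inner_smul_left, hee]
        intro h; apply ht; simp at h ⊢; linarith
      exact (mul_eq_zero.1 (hli (x + t • e) i)).resolve_left (hψne _ h1))
    have := congrFun this 0
    simpa using this
  have hconst : ∀ x y, Q x = Q y := by
    refine is_const_of_fderiv_eq_zero (𝕜 := ℝ) (fun x => hQ.diff x) fun x => ?_
    have : (fderiv ℝ Q x : EE (n+1) →ₗ[ℝ] ℝ) = 0 := by
      apply (EuclideanSpace.basisFun (Fin (n+1)) ℝ).toBasis.ext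
      intro i
      have := hdQ x i
      simpa [dd] using this
    ext y
    exact LinearMap.congr_fun this y
  have hzc : z = fun x => Q 0 * ψ x := by
    funext x; rw [hzQ, hconst x 0]; ring
  have h1 : dd e z 0 = 2 * dd e Z 0 := by
    rw [dd_sub hZ (hZ.comp_iso R), dd_iso hZ, hRe]
    simp [dd]; ring
  have h2 : dd e z 0 = Q 0 * dd e ψ 0 := by
    rw [hzc, dd_const_mul hψ]
  have h3 := congrFun hzc x
  simp only [z] at h3
  rw [h3, ← h1, h2, mul_div_assoc, div_self hw20.ne, mul_one]
end
end

section
open MeasureTheory Real Filter Topology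
noncomputable section
variable {n : ℕ} {ω p : ℝ} {u : EE (n+1) → ℝ}

lemma exp_integrable {δ : ℝ} (hδ : 0 < δ) : Integrable (fun x : EE (n+1) => exp (-δ * ‖x‖)) := by
  rw [integrable_fun_norm_addHaar (E := EE (n+1)) volume (f := fun r => exp (-δ * r))]
  have := integrableOn_rpow_mul_exp_neg_mul_rpow (p := 1) (s := n) (b := δ) (by
    have : (0:ℝ) ≤ n := Nat.cast_nonneg n
    linarith) one_pos hδ
  refine this.congr_fun (fun r hr => ?_) measurableSet_Ioi
  simp

lemma sq_integrable {f : EE (n+1) → ℝ} (hf : Continuous f) {C δ : ℝ} (hδ : 0 < δ)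
    (h : ∀ x, |f x| ≤ C * exp (-δ * ‖x‖)) : Integrable (fun x => f x ^ 2) := by
  refine ((exp_integrable (n := n) hδ).const_mul (C ^ 2)).mono' (hf.pow 2).aestronglyMeasurable
    (Eventually.of_forall fun x => ?_)
  rw [Real.norm_of_nonneg (sq_nonneg _), ← sq_abs]
  calc _ ≤ (C * exp (-δ * ‖x‖)) ^ 2 := pow_le_pow_left₀ (abs_nonneg _) (h x) 2
    _ = C ^ 2 * exp (-δ * ‖x‖) * exp (-δ * ‖x‖) := by ring
    _ ≤ C ^ 2 * exp (-δ * ‖x‖) * 1 := by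
      gcongr
      rw [exp_le_one_iff]; nlinarith [norm_nonneg x]
    _ = _ := by ring

lemma sq_integrable_add {f g : EE (n+1) → ℝ} (hf : Continuous f) (hg : Continuous g)
    (h1 : Integrable (fun x => f x ^ 2)) (h2 : Integrable (fun x => g x ^ 2)) :
    Integrable (fun x => (f x + g x) ^ 2) := by
  refine ((h1.const_mul 2).add (h2.const_mul 2)).mono' ((hf.add hg).pow 2).aestronglyMeasurable
    (Eventually.of_forall fun x => ?_)
  rw [Real.norm_of_nonneg (sq_nonneg _)]
  simp only [Pi.add_apply]
  nlinarith [sq_nonneg (f x - g x)]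

lemma sq_integrable_mul {f g : EE (n+1) → ℝ} (hf : Continuous f) (hg : Continuous g) {M : ℝ}
    (h1 : ∀ x, |f x| ≤ M) (h2 : Integrable (fun x => g x ^ 2)) :
    Integrable (fun x => (f x * g x) ^ 2) := by
  refine (h2.const_mul (M ^ 2)).mono' ((hf.mul hg).pow 2).aestronglyMeasurable
    (Eventually.of_forall fun x => ?_)
  rw [Real.norm_of_nonneg (sq_nonneg _), mul_pow]
  refine mul_le_mul_of_nonneg_right ?_ (sq_nonneg _)
  rw [← sq_abs]
  exact pow_le_pow_left₀ (abs_nonneg _) (h1 x) 2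

lemma fderiv_sq_le {f : EE (n+1) → ℝ} (x) : ‖fderiv ℝ f x‖ ^ 2 ≤ ∑ i, dd (EuclideanSpace.single i 1) f x ^ 2 := by
  set S := ∑ i, dd (EuclideanSpace.single i 1) f x ^ 2
  have hS : 0 ≤ S := Finset.sum_nonneg fun i _ => sq_nonneg _
  have h : ‖fderiv ℝ f x‖ ≤ √S := by
    refine ContinuousLinearMap.opNorm_le_bound _ (Real.sqrt_nonneg _) fun y => ?_
    have hy : fderiv ℝ f x y = ∑ i, dd (EuclideanSpace.single i 1) f x * y i := by
      conv_lhs => rw [← (EuclideanSpace.basisFun (Fin (n+1)) ℝ).sum_repr y]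
      simp [dd, mul_comm]
    rw [hy, EuclideanSpace.norm_eq, ← Real.sqrt_mul hS, Real.norm_eq_abs]
    apply Real.abs_le_sqrt
    simp only [Real.norm_eq_abs, sq_abs]
    exact Finset.sum_mul_sq_le_sq_mul_sq _ _ _
  calc _ ≤ (√S) ^ 2 := pow_le_pow_left₀ (norm_nonneg _) h 2
    _ = S := Real.sq_sqrt hS

lemma dd_lin (b : EE (n+1)) (f : EE (n+1) → ℝ) (x) : dd b f x = ∑ l, b l * pd l f x := by
  unfold dd
  conv_lhs => rw [← (EuclideanSpace.basisFun (Fin (n+1)) ℝ).sum_repr b]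
  simp [pd]

lemma dd_dd_ww' (hu : IsGroundState (n+1) ω p u) (a b x) :
    dd a (dd b (ww u)) x = qS (u x) * dd a (dd b u) x + dd b u x * (2 * u x / qS (u x) * dd a u x) := by
  have hqs : Sm (fun y => qS (u y)) := qS_contDiff.comp hu.smooth
  rw [show dd b (ww u) = fun x => qS (u x) * dd b u x from funext fun x => dd_ww hu b x]
  rw [dd_mul hqs (Sm.dd hu.smooth b), dd_comp hu.smooth a x (qS_hasDeriv _)]

lemma refl_eq {e : EE (n+1)} (he : ‖e‖ = 1) (b : EE (n+1)) :
    (ℝ ∙ e)ᗮ.reflection b = b - (2 * inner ℝ b e : ℝ) • e := by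
  set R := (ℝ ∙ e)ᗮ.reflection
  have hRe : R e = -e := Submodule.reflection_orthogonalComplement_singleton_eq_neg e
  set s : ℝ := inner ℝ b e
  have h1 : R (b - s • e) = b - s • e := by
    apply Submodule.reflection_mem_subspace_eq_self
    rw [Submodule.mem_orthogonal_singleton_iff_inner_left, inner_sub_left, inner_smul_left,
      real_inner_self_eq_norm_sq, he]
    simp [s]
  have h2 : R b = R (b - s • e) + s • R e := by rw [← map_smul, ← map_add]; simp
  rw [h2, h1, hRe]; module

lemma rad_of_refl {f : EE (n+1) → ℝ} (h : ∀ e : EE (n+1), ‖e‖ = 1 → ∀ x, f ((ℝ ∙ e)ᗮ.reflection x) = f x) : Rad f := by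
  intro x y hxy
  by_cases hne : x = y
  · rw [hne]
  have h0 : 0 < ‖x - y‖ := norm_pos_iff.2 (sub_ne_zero.2 hne)
  set e := ‖x - y‖⁻¹ • (x - y)
  have he : ‖e‖ = 1 := by simp [e, norm_smul, h0.ne']
  have hin : 2 * inner ℝ x (x - y) = ‖x - y‖ ^ 2 := by
    rw [@norm_sub_sq_real, inner_sub_right, real_inner_self_eq_norm_sq, hxy]; ring
  have h1 : (ℝ ∙ e)ᗮ.reflection x = y := by
    rw [refl_eq he]
    have : (2 * inner ℝ x e : ℝ) • e = x - y := by
      simp only [e, inner_smul_right, smul_smul]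
      rw [show 2 * (‖x - y‖⁻¹ * inner ℝ x (x - y)) * ‖x - y‖⁻¹ = 1 by
        rw [show 2 * (‖x - y‖⁻¹ * inner ℝ x (x - y)) * ‖x - y‖⁻¹ = (2 * inner ℝ x (x - y)) * (‖x - y‖⁻¹) ^ 2 by ring, hin]
        field_simp, one_smul]
    rw [this]; simp
  rw [← h1, h e he]

theorem main (hu : IsGroundState (n+1) ω p u) (hp : 1 < p) (hω : 0 < ω) {v : EE (n+1) → ℝ} (hv : Sm v)
    (hint : Integrable (fun x => (v x) ^ 2 + gradsq v x)) (heq : ∀ x, Lplus ω p u v x = 0) :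
    ∃ c : Fin (n+1) → ℝ, ∀ x, v x = ∑ l, c l * pd l u x := by
  have hgs : ∀ x, 0 ≤ gradsq v x := fun x => Finset.sum_nonneg fun i _ => sq_nonneg _
  have cu := hu.smooth.continuous
  have cv := hv.continuous
  have hqs : Sm (fun y => qS (u y)) := qS_contDiff.comp hu.smooth
  have cqs := hqs.continuous
  have hvint : Integrable (fun x => v x ^ 2) := by
    refine hint.mono' (cv.pow 2).aestronglyMeasurable (Eventually.of_forall fun x => ?_)
    rw [Real.norm_of_nonneg (sq_nonneg _)]; linarith [hgs x]
  have hdvint : ∀ i, Integrable (fun x => dd (EuclideanSpace.single i 1) v x ^ 2) := by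
    intro i
    refine hint.mono' ((hv.dd _).continuous.pow 2).aestronglyMeasurable (Eventually.of_forall fun x => ?_)
    rw [Real.norm_of_nonneg (sq_nonneg _)]
    have : dd (EuclideanSpace.single i 1) v x ^ 2 ≤ gradsq v x :=
      Finset.single_le_sum (f := fun i => pd i v x ^ 2) (fun i _ => sq_nonneg _) (Finset.mem_univ i)
    nlinarith [sq_nonneg (v x)]
  set Z : EE (n+1) → ℝ := fun y => qS (u y) * v y
  have hZ : Sm Z := hqs.mul hv
  have hZL := lap_Z hu hv heq
  set w := ww u
  have hw : Sm w := ww_smooth hu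
  have hwr : Rad w := ww_rad hu
  have hqb : ∀ x, |qS (u x)| ≤ qS (u 0) := fun x => by
    rw [abs_of_pos (qS_pos _)]; exact qS_mono (hu.pos x).le (hu.le_zero x)
  have hZint : Integrable (fun x => Z x ^ 2) := sq_integrable_mul cqs cv hqb hvint
  obtain ⟨C, hC, δ, hδ, hd⟩ := hu.decays
  have hE1 : ∀ x : EE (n+1), exp (-δ * ‖x‖) ≤ 1 := fun x => by
    rw [exp_le_one_iff]; nlinarith [norm_nonneg x]
  have hrat : ∀ x, |2 * u x / qS (u x)| ≤ 2 * u 0 := by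
    intro x
    have := hu.pos x
    rw [abs_of_pos (div_pos (by linarith) (qS_pos _))]
    refine (div_le_self (by positivity) (qS_one_le _)).trans ?_
    have := hu.le_zero x
    linarith
  have cdu : ∀ e, Continuous (dd e u) := fun e => (Sm.dd hu.smooth e).continuous
  have cdv : ∀ e, Continuous (dd e v) := fun e => (hv.dd e).continuous
  have crat : Continuous (fun x => 2 * u x / qS (u x)) :=
    (continuous_const.mul cu).div cqs fun x => (qS_pos _).ne'
  have hu0 := hu.pos 0
  have hdZint : ∀ i, Integrable (fun x => dd (EuclideanSpace.single i 1) Z x ^ 2) := by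
    intro i
    set e : EE (n+1) := EuclideanSpace.single i 1
    have h1 : ∀ x, dd e Z x = qS (u x) * dd e v x + (2 * u x / qS (u x) * dd e u x) * v x := by
      intro x
      rw [dd_mul hqs hv, dd_comp hu.smooth e x (qS_hasDeriv _)]; ring
    simp only [h1]
    refine sq_integrable_add (cqs.mul (cdv e)) ((crat.mul (cdu e)).mul cv) (sq_integrable_mul cqs (cdv e) hqb (hdvint i))
      (sq_integrable_mul (crat.mul (cdu e)) cv (M := (2 * u 0) * (C * ‖e‖)) (fun x => ?_) hvint)
    rw [abs_mul]
    have := (hd x).2.1 e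
    have h3 : C * ‖e‖ * exp (-δ * ‖x‖) ≤ C * ‖e‖ * 1 := by gcongr; exact hE1 x
    exact mul_le_mul (hrat x) (by linarith) (abs_nonneg _) (by positivity)
  set k := dd (e0 n) (dd (e0 n) w) 0
  have hk : ∀ e, ‖e‖ = 1 → dd e (dd e w) 0 = k := fun e he => by
    have := (hwr.ray hw he e0_norm 0).2
    simpa using this
  have hk0 : k < 0 := w20_neg hu (by omega) hp (u0_gt hu hp) e0_norm
  set b := (InnerProductSpace.toDual ℝ (EE (n+1))).symm (fderiv ℝ Z 0)
  have hb : ∀ e, inner ℝ b e = dd e Z 0 := fun e => InnerProductSpace.toDual_symm_apply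
  have hψ : Sm (dd b w) := hw.dd b
  set z : EE (n+1) → ℝ := fun x => Z x - k⁻¹ * dd b w x
  have hz : Sm z := hZ.sub (contDiff_const.mul hψ)
  have hzL : ∀ x, lap z x = - (qV ω p (u x) * z x) := by
    intro x
    rw [lap_sub hZ (g := fun x => k⁻¹ * dd b w x) (contDiff_const.mul hψ), lap_const_mul hψ, hZL, lap_dd_ww hu]
    simp only [z, Z]; ring
  have hzr : Rad z := by
    refine rad_of_refl fun e he x => ?_
    have h1 := odd_part hu hp hω hZ hZL hZint he x
    set R := (ℝ ∙ e)ᗮ.reflection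
    rw [hk e he] at h1
    have h2 : dd b w (R x) = dd (R b) w x := by
      have e1 : w = fun y => w (R y) := funext fun y => hwr _ _ (by simp)
      have := dd_iso hw R b (R x)
      rw [← e1] at this
      rw [this]
      simp [R]
    have h3 : dd (R b) w x = dd b w x - 2 * dd e Z 0 * dd e w x := by
      rw [refl_eq he, ← hb e]; simp [dd]
    simp only [z]
    rw [h2, h3]
    have : 2 * dd e Z 0 / k * dd e w x = k⁻¹ * (2 * dd e Z 0 * dd e w x) := by ring
    change Z x - Z (R x) = 2 * dd e Z 0 / k * dd e w x at h1
    linarith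
  have hψint : Integrable (fun x => (dd b w x) ^ 2) := by
    obtain ⟨C', hC', δ', hδ', hd'⟩ := ww_decays hu
    exact sq_integrable hψ.continuous hδ' fun x => (hd' x).2.2.1 b
  have hdψint : ∀ e, Integrable (fun x => (dd e (dd b w) x) ^ 2) := by
    intro e
    have c1 : Continuous (dd e (dd b u)) := (Sm.dd (Sm.dd hu.smooth b) e).continuous
    have h1 : ∀ x, dd e (dd b w) x = qS (u x) * dd e (dd b u) x + (2 * u x / qS (u x) * dd e u x) * dd b u x := by
      intro x; rw [dd_dd_ww' hu]; ring
    simp only [h1]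
    refine sq_integrable_add (cqs.mul c1) ((crat.mul (cdu e)).mul (cdu b))
      (sq_integrable_mul cqs c1 hqb (sq_integrable c1 hδ fun x => (hd x).2.2 e b))
      (sq_integrable_mul (crat.mul (cdu e)) (cdu b) (M := (2 * u 0) * (C * ‖e‖)) (fun x => ?_)
        (sq_integrable (cdu b) hδ fun x => (hd x).2.1 b))
    rw [abs_mul]
    have := (hd x).2.1 e
    have h3 : C * ‖e‖ * exp (-δ * ‖x‖) ≤ C * ‖e‖ * 1 := by gcongr; exact hE1 x
    exact mul_le_mul (hrat x) (by linarith) (abs_nonneg _) (by positivity)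
  have hzint : Integrable (fun x => z x ^ 2 + ‖fderiv ℝ z x‖ ^ 2) := by
    have i1 : Integrable (fun x => z x ^ 2) := by
      have := sq_integrable_add (f := Z) (g := fun x => (-k⁻¹) * dd b w x) hZ.continuous (continuous_const.mul hψ.continuous)
        hZint (sq_integrable_mul continuous_const hψ.continuous (fun _ => le_rfl) hψint)
      simpa only [z, sub_eq_add_neg, neg_mul] using this
    have i2 : ∀ i, Integrable (fun x => dd (EuclideanSpace.single i 1) z x ^ 2) := by
      intro i
      set e : EE (n+1) := EuclideanSpace.single i 1
      have c1 : Continuous (dd e (dd b w)) := (hψ.dd e).continuous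
      have h1 : ∀ x, dd e z x = dd e Z x + (-k⁻¹) * dd e (dd b w) x := by
        intro x
        rw [dd_sub hZ (g := fun x => k⁻¹ * dd b w x) (contDiff_const.mul hψ), dd_const_mul hψ]; ring
      simp only [h1]
      exact sq_integrable_add (hZ.dd e).continuous (continuous_const.mul c1)
        (hdZint i) (sq_integrable_mul continuous_const c1 (fun _ => le_rfl) (hdψint e))
    have i3 : Integrable (fun x => ∑ i, dd (EuclideanSpace.single i 1) z x ^ 2) := integrable_finsetSum _ fun i _ => i2 i
    refine (i1.add i3).mono' ?_ (Eventually.of_forall fun x => ?_)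
    · have : Continuous (fderiv ℝ z) := hz.continuous_fderiv (by simp)
      exact ((hz.continuous.pow 2).add (this.norm.pow 2)).aestronglyMeasurable
    · rw [Real.norm_of_nonneg (by positivity)]
      exact add_le_add le_rfl (fderiv_sq_le x)
  have hz0 := rad_zero hu hp hω hz hzr hzL hzint
  refine ⟨fun l => k⁻¹ * b l, fun x => ?_⟩
  have h1 := hz0 x
  simp only [z, Z] at h1
  rw [dd_ww hu, dd_lin] at h1
  have h2 : qS (u x) * (v x - k⁻¹ * ∑ l, b l * pd l u x) = 0 := by linarith
  have h3 := (mul_eq_zero.1 h2).resolve_left (qS_pos _).ne'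
  simp only [mul_assoc, ← Finset.mul_sum]
  linarith
end
end

/-- The real kernel of `L₊` is spanned by the partial derivatives of `u`. -/
theorem stmt1 (N : ℕ) (hN : 1 ≤ N) (ω p : ℝ) (hω : 0 < ω) (hp : 1 < p)
    (hpmax : 3 ≤ N → p < (3 * (N : ℝ) + 2) / ((N : ℝ) - 2))
    (u : EuclideanSpace ℝ (Fin N) → ℝ) (hu : IsGroundState N ω p u)
    (v : EuclideanSpace ℝ (Fin N) → ℝ) (hv : ContDiff ℝ (⊤ : ℕ∞) v)
    (hint : Integrable (fun x => (v x) ^ 2 + gradsq v x))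
    (heq : ∀ x, Lplus ω p u v x = 0) :
    ∃ c : Fin N → ℝ, ∀ x, v x = ∑ l : Fin N, c l * pd l u x := by
  obtain ⟨n, rfl⟩ : ∃ n, N = n + 1 := ⟨N - 1, by omega⟩
  exact main hu hp hω hv hint heq

end
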